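/- arXiv:2402.18143 — 7 statements merged into one kernel-verified Lean document; each statement's English description precedes it below -/
import Mathlib

section
/- Let a > 0, let f ∈ C^∞(ℝ), and let v₀ ∈ L¹([0,∞)) ∩ L^∞([0,∞)). Then the problem (E) has at most one weak solution: if v₁ and v₂ are both weak solutions of (E), then for every t > 0 one has v₁(·,t) = v₂(·,t) almost everywhere on [0,∞). -/
open MeasureTheory Set

/-- A weak solution of problem (E): `v_t = (f(v))_x + a v_xx` on `(0,∞)×(0,∞)`,
`v(0,t) = 1` for `t > 0`, `v(·,0) = v₀`, in the sense of the test-function identity. -/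
def IsWeakSolutionE (a : ℝ) (f v₀ : ℝ → ℝ) (v : ℝ → ℝ → ℝ) : Prop :=
  Measurable (Function.uncurry v) ∧
  (∀ x : ℝ, v x 0 = v₀ x) ∧
  (∀ T : ℝ, ∃ C : ℝ,
    ∀ t ∈ Icc (0:ℝ) T,
      (∀ᵐ x ∂(volume.restrict (Ici (0:ℝ))), |v x t| ≤ C) ∧
      (∫ x in Ici (0:ℝ), |v x t|) ≤ C) ∧
  (∀ t : ℝ, 0 < t → ∀ φ : ℝ → ℝ,
    ContDiff ℝ (⊤ : ℕ∞) φ → HasCompactSupport φ → φ 0 = 0 →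
    (∫ x in Ici (0:ℝ), v x t * φ x) - (∫ x in Ici (0:ℝ), v₀ x * φ x)
      = -(∫ s in (0:ℝ)..t, ∫ x in Ici (0:ℝ), f (v x s) * deriv φ x)
        + a * (∫ s in (0:ℝ)..t, ∫ x in Ici (0:ℝ), v x s * deriv (deriv φ) x)
        + a * deriv φ 0 * t)

open scoped Topology

noncomputable def cvE (k h : ℝ → ℝ) (x : ℝ) : ℝ := ∫ t, k t * h (x - t)

noncomputable def etaE (x : ℝ) : ℝ := (1 + x ^ 2)⁻¹

lemma etaE_pos (x : ℝ) : 0 < etaE x := by unfold etaE; positivity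

lemma etaE_int : Integrable etaE := integrable_inv_one_add_sq

lemma etaE_deriv (x : ℝ) : HasDerivAt etaE (-(2 * x) / (1 + x ^ 2) ^ 2) x := by
  have h : HasDerivAt (fun x : ℝ => 1 + x ^ 2) (2 * x) x := by
    simpa using (hasDerivAt_pow 2 x).const_add 1
  exact h.inv (by positivity)

lemma etaE_deriv_le (x : ℝ) : |(-(2 * x) / (1 + x ^ 2) ^ 2)| ≤ etaE x := by
  unfold etaE
  have h1 : (0:ℝ) < 1 + x ^ 2 := by positivity
  rw [abs_div, abs_of_pos (by positivity : (0:ℝ) < (1 + x ^ 2) ^ 2), div_le_iff₀ (by positivity)]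
  have : (1 + x ^ 2)⁻¹ * (1 + x ^ 2) ^ 2 = 1 + x ^ 2 := by field_simp
  rw [this, abs_le]
  constructor <;> nlinarith [sq_nonneg (x - 1), sq_nonneg (x + 1)]

lemma etaE_meas : Measurable etaE := by unfold etaE; fun_prop

lemma int_bdd_eta {h : ℝ → ℝ} (hm : Measurable h) {B : ℝ} (hB : ∀ x, |h x| ≤ B) :
    Integrable (fun x => h x * etaE x) :=
  etaE_int.bdd_mul hm.aestronglyMeasurable (Filter.Eventually.of_forall hB)

lemma int_bdd_eta_prod {h : ℝ × ℝ → ℝ} (hm : Measurable h) {B : ℝ} (hB : ∀ x, |h x| ≤ B) (a b : ℝ) :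
    Integrable (fun p : ℝ × ℝ => h p * etaE p.2) ((volume.restrict (uIoc a b)).prod volume) := by
  have : IsFiniteMeasure (volume.restrict (uIoc a b)) := by
    unfold uIoc; infer_instance
  have h1 : Integrable (fun p : ℝ × ℝ => (1:ℝ) * etaE p.2)
      ((volume.restrict (uIoc a b)).prod volume) :=
    Integrable.mul_prod (f := fun _ : ℝ => (1:ℝ)) (integrable_const _) etaE_int
  simp only [one_mul] at h1
  exact h1.bdd_mul hm.aestronglyMeasurable (Filter.Eventually.of_forall hB)

lemma cvE_meas {W : ℝ → ℝ → ℝ} (hW : Measurable (Function.uncurry W)) {k : ℝ → ℝ}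
    (hk : Continuous k) : Measurable (fun p : ℝ × ℝ => cvE k (W p.1) p.2) := by
  unfold cvE
  have hk' := hk.measurable
  have : Measurable (Function.uncurry fun (p : ℝ × ℝ) (t : ℝ) => k t * W p.1 (p.2 - t)) := by
    have h2 : Measurable (fun q : (ℝ × ℝ) × ℝ => Function.uncurry W (q.1.1, q.1.2 - q.2)) :=
      hW.comp (by fun_prop)
    exact (hk'.comp measurable_snd).mul h2
  exact (this.stronglyMeasurable.integral_prod_right).measurable

lemma cvE_bound {k h : ℝ → ℝ} (hk : Integrable k) {M : ℝ}
    (hM : ∀ x, |h x| ≤ M) (x : ℝ) : |cvE k h x| ≤ M * ∫ t, |k t| := by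
  unfold cvE
  rw [← integral_const_mul, ← Real.norm_eq_abs]
  apply norm_integral_le_of_norm_le (hk.abs.const_mul M)
  refine Filter.Eventually.of_forall fun t => ?_
  rw [Real.norm_eq_abs, abs_mul, mul_comm]
  exact mul_le_mul_of_nonneg_right (hM _) (abs_nonneg _)

lemma bdd_locInt {h : ℝ → ℝ} (hm : Measurable h) {M : ℝ} (hM : ∀ x, |h x| ≤ M) :
    LocallyIntegrable h := by
  have : LocallyIntegrable (fun _ : ℝ => M) volume := locallyIntegrable_const M
  refine this.mono hm.aestronglyMeasurable (Filter.Eventually.of_forall fun x => ?_)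
  exact (hM x).trans (le_abs_self M)

lemma cvE_eq (k h : ℝ → ℝ) :
    cvE k h = convolution k h (ContinuousLinearMap.lsmul ℝ ℝ) volume := by
  ext x
  simp [cvE, convolution]

lemma cvE_deriv {k h : ℝ → ℝ} (hk : ContDiff ℝ 1 k) (hc : HasCompactSupport k)
    (hh : LocallyIntegrable h) (x : ℝ) : HasDerivAt (cvE k h) (cvE (deriv k) h x) x := by
  rw [cvE_eq, cvE_eq]
  exact hc.hasDerivAt_convolution_left _ hk hh x

lemma cvE_swap (k h : ℝ → ℝ) (x : ℝ) : cvE k h x = ∫ y, h y * k (x - y) := by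
  rw [cvE_eq, convolution_lsmul_swap]
  simp [mul_comm]

lemma sq_integral {b : ℝ → ℝ} {t : ℝ} (hb : IntervalIntegrable b volume 0 t) :
    (∫ s in (0:ℝ)..t, b s) ^ 2 = ∫ s in (0:ℝ)..t, 2 * ((∫ r in (0:ℝ)..s, b r) * b s) := by
  have hac : AbsolutelyContinuousOnInterval (fun s => ∫ r in (0:ℝ)..s, b r) 0 t :=
    hb.absolutelyContinuousOnInterval_intervalIntegral (by simp)
  have h := hac.integral_deriv_mul_eq_sub hac
  have hd := hb.ae_hasDerivAt_integral
  simp only [intervalIntegral.integral_same] at h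
  rw [mul_zero, sub_zero] at h
  rw [sq, ← h]
  apply intervalIntegral.integral_congr_ae
  filter_upwards [hd] with s hs hst
  rw [(hs (uIoc_subset_uIcc hst) 0 (by simp)).deriv]
  ring

lemma ibp_ineq {a : ℝ} (ha : 0 < a) {u u' g F' : ℝ → ℝ} {B : ℝ}
    (hu : ∀ x, HasDerivAt u (u' x) x)
    (hF : ∀ x, HasDerivAt (fun x => g x + a * u' x) (F' x) x)
    (mu : Measurable u) (mu' : Measurable u') (mg : Measurable g) (mF : Measurable F')
    (bu : ∀ x, |u x| ≤ B) (bu' : ∀ x, |u' x| ≤ B) (bg : ∀ x, |g x| ≤ B) (bF : ∀ x, |F' x| ≤ B) :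
    ∫ x, (u x * F' x) * etaE x ≤
      (1 / (2 * a) + a / 2 + 1 / 2) * ∫ x, (u x ^ 2 + g x ^ 2) * etaE x := by
  have hB : 0 ≤ B := (abs_nonneg _).trans (bu 0)
  set e' : ℝ → ℝ := fun x => -(2 * x) / (1 + x ^ 2) ^ 2 with he'
  have me' : Measurable e' := by fun_prop
  have hue : ∀ x, HasDerivAt (fun x => u x * etaE x) (u' x * etaE x + u x * e' x) x :=
    fun x => (hu x).mul (etaE_deriv x)
  have bFF : ∀ x, |g x + a * u' x| ≤ B + a * B := fun x => by
    refine (abs_add_le _ _).trans (add_le_add (bg x) ?_)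
    rw [abs_mul, abs_of_pos ha]
    exact mul_le_mul_of_nonneg_left (bu' x) ha.le
  have i1 : Integrable (fun x => (u x * F' x) * etaE x) :=
    int_bdd_eta (mu.mul mF) (B := B * B) fun x => by
      rw [abs_mul]; exact mul_le_mul (bu x) (bF x) (abs_nonneg _) hB
  have i2 : Integrable (fun x => (u x * (g x + a * u' x)) * etaE x) :=
    int_bdd_eta (by fun_prop) (B := B * (B + a * B)) fun x => by
      rw [abs_mul]; exact mul_le_mul (bu x) (bFF x) (abs_nonneg _) hB
  have i3 : Integrable (fun x => (u' x * (g x + a * u' x)) * etaE x) :=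
    int_bdd_eta (by fun_prop) (B := B * (B + a * B)) fun x => by
      rw [abs_mul]; exact mul_le_mul (bu' x) (bFF x) (abs_nonneg _) hB
  have i4 : Integrable (fun x => (u x * (g x + a * u' x)) * e' x) := by
    refine i2.mono (by fun_prop) (Filter.Eventually.of_forall fun x => ?_)
    rw [norm_mul, norm_mul _ (etaE x)]
    refine mul_le_mul_of_nonneg_left ?_ (norm_nonneg _)
    rw [Real.norm_eq_abs, Real.norm_of_nonneg (etaE_pos x).le]
    exact etaE_deriv_le x
  have i5 : Integrable (fun x => (u x ^ 2 + g x ^ 2) * etaE x) :=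
    int_bdd_eta (by fun_prop) (B := B ^ 2 + B ^ 2) fun x => by
      rw [abs_of_nonneg (by positivity)]
      have := sq_le_sq.2 ((bu x).trans (le_abs_self B))
      have := sq_le_sq.2 ((bg x).trans (le_abs_self B))
      linarith
  have key := integral_mul_deriv_eq_deriv_mul_of_integrable (A := ℝ)
    (u := fun x => u x * etaE x) (v := fun x => g x + a * u' x)
    (fun x _ => hue x) (fun x _ => hF x)
    (i1.congr (Filter.Eventually.of_forall fun x => by simp; ring))
    ((i3.add i4).congr (Filter.Eventually.of_forall fun x => by simp; ring))
    (i2.congr (Filter.Eventually.of_forall fun x => by simp; ring))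
  have e1 : ∫ x, (u x * F' x) * etaE x = ∫ x, (u x * etaE x) * F' x := by
    congr 1; ext x; ring
  rw [e1, key, ← integral_neg, ← integral_const_mul]
  apply integral_mono
  · exact ((i3.add i4).congr (Filter.Eventually.of_forall fun x => by simp; ring)).neg
  · exact i5.const_mul _
  intro x
  have he := etaE_pos x
  obtain ⟨h1, h2⟩ := abs_le.1 (etaE_deriv_le x)
  change -((u' x * etaE x + u x * e' x) * (g x + a * u' x)) ≤
    (1 / (2 * a) + a / 2 + 1 / 2) * ((u x ^ 2 + g x ^ 2) * etaE x)
  have h3 : -(u x * (g x + a * u' x)) * e' x ≤ (|u x| * (|g x| + a * |u' x|)) * etaE x := by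
    refine (le_abs_self _).trans ?_
    rw [abs_mul, abs_neg, abs_mul]
    have h4 : |g x + a * u' x| ≤ |g x| + a * |u' x| := by
      refine (abs_add_le _ _).trans ?_
      rw [abs_mul, abs_of_pos ha]
    gcongr
    exact etaE_deriv_le x
  have h5 : -(u' x * (g x + a * u' x)) ≤ |u' x| * |g x| - a * |u' x| ^ 2 := by
    have : -(u' x * g x) ≤ |u' x| * |g x| := by rw [← abs_mul]; exact neg_le_abs _
    rw [sq_abs]; nlinarith
  have h6 : |u' x| * |g x| - a * |u' x| ^ 2 + |u x| * (|g x| + a * |u' x|) ≤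
      (1 / (2 * a) + a / 2 + 1 / 2) * (u x ^ 2 + g x ^ 2) := by
    rw [← sq_abs (u x), ← sq_abs (g x)]
    generalize |u' x| = p, |g x| = q, |u x| = r
    have k1 : p * q ≤ a / 2 * p ^ 2 + 1 / (2 * a) * q ^ 2 := by
      have : a / 2 * p ^ 2 + 1 / (2 * a) * q ^ 2 - p * q = (a * p - q) ^ 2 / (2 * a) := by
        field_simp; ring
      have : 0 ≤ (a * p - q) ^ 2 / (2 * a) := by positivity
      linarith
    have k2 : a * (r * p) ≤ a / 2 * p ^ 2 + a / 2 * r ^ 2 := by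
      nlinarith [mul_nonneg ha.le (sq_nonneg (r - p))]
    have k3 : r * q ≤ 1 / 2 * r ^ 2 + 1 / 2 * q ^ 2 := by nlinarith [sq_nonneg (r - q)]
    have k4 : 0 ≤ 1 / (2 * a) * r ^ 2 := by positivity
    have k5 : 0 ≤ a / 2 * q ^ 2 := by positivity
    nlinarith
  have h7 := mul_le_mul_of_nonneg_right h6 he.le
  have h8 := mul_le_mul_of_nonneg_right h5 he.le
  nlinarith

lemma gronwallE {y : ℝ → ℝ} {T M K : ℝ} (hM : ∀ t ∈ Ioc 0 T, y t ≤ M) (hK : 0 ≤ K)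
    (hy0 : ∀ t, 0 ≤ y t)
    (hy : ∀ t ∈ Ioc 0 T, y t ≤ K * ∫ s in (0:ℝ)..t, y s) : ∀ t ∈ Ioc 0 T, y t = 0 := by
  have hind : ∀ n : ℕ, ∀ t ∈ Ioc 0 T, y t ≤ M * ((K * t) ^ n / n.factorial) := by
    intro n
    induction n with
    | zero => intro t ht; simpa using hM t ht
    | succ n ih =>
      intro t ht
      refine (hy t ht).trans ?_
      have ic : IntervalIntegrable (fun s : ℝ => M * ((K * s) ^ n / n.factorial)) volume 0 t :=
        Continuous.intervalIntegrable (by fun_prop) _ _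
      have hle : ∫ s in (0:ℝ)..t, y s ≤ ∫ s in (0:ℝ)..t, M * ((K * s) ^ n / n.factorial) := by
        rw [intervalIntegral.integral_of_le ht.1.le, intervalIntegral.integral_of_le ht.1.le]
        apply integral_mono_of_nonneg
        · exact Filter.Eventually.of_forall hy0
        · exact ic.1
        · refine (ae_restrict_iff' measurableSet_Ioc).2 (Filter.Eventually.of_forall fun s hs => ?_)
          exact ih s ⟨hs.1, hs.2.trans ht.2⟩
      refine (mul_le_mul_of_nonneg_left hle hK).trans (le_of_eq ?_)
      have : (fun s : ℝ => M * ((K * s) ^ n / n.factorial)) =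
          fun s => (M * K ^ n / n.factorial) * s ^ n := by
        ext s; rw [mul_pow]; ring
      rw [this, intervalIntegral.integral_const_mul, integral_pow, Nat.factorial_succ]
      push_cast
      have := n.factorial_ne_zero
      field_simp
      ring
  intro t ht
  have hlim : Filter.Tendsto (fun n : ℕ => M * ((K * t) ^ n / n.factorial)) Filter.atTop (𝓝 0) := by
    simpa using (FloorSemiring.tendsto_pow_div_factorial_atTop (K * t)).const_mul M
  exact le_antisymm (ge_of_tendsto' hlim fun n => hind n t ht) (hy0 t)

lemma cont_cs_int {k : ℝ → ℝ} (hk : Continuous k) (hc : HasCompactSupport k) : Integrable k :=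
  hk.integrable_of_hasCompactSupport hc

lemma meas_slice {W : ℝ → ℝ → ℝ} (hW : Measurable (Function.uncurry W)) (s : ℝ) :
    Measurable (W s) := hW.comp (measurable_prodMk_left)

lemma mollified {a : ℝ} (ha : 0 < a) {T M N : ℝ} {W G : ℝ → ℝ → ℝ}
    (hW : Measurable (Function.uncurry W)) (hG : Measurable (Function.uncurry G))
    (bW : ∀ s x, |W s x| ≤ M) (bG : ∀ s x, |G s x| ≤ N)
    (hweak : ∀ t ∈ Ioc 0 T, ∀ φ : ℝ → ℝ, ContDiff ℝ (⊤ : ℕ∞) φ → HasCompactSupport φ →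
      ∫ y, W t y * φ y = ∫ s in (0:ℝ)..t,
        (-(∫ y, G s y * deriv φ y) + a * ∫ y, W s y * deriv (deriv φ) y))
    {ρ : ℝ → ℝ} (hρ : ContDiff ℝ (⊤ : ℕ∞) ρ) (hc : HasCompactSupport ρ) {t : ℝ} (ht : t ∈ Ioc 0 T) :
    ∫ x, (cvE ρ (W t) x) ^ 2 * etaE x ≤ (2 * (1 / (2 * a) + a / 2 + 1 / 2)) *
      ∫ s in (0:ℝ)..t, ∫ x, ((cvE ρ (W s) x) ^ 2 + (cvE ρ (G s) x) ^ 2) * etaE x := by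
  have hρ1 : ContDiff ℝ (⊤ : ℕ∞) (deriv ρ) := hρ.deriv' 
  have hρ2 : ContDiff ℝ (⊤ : ℕ∞) (deriv (deriv ρ)) := hρ1.deriv'
  have hc1 : HasCompactSupport (deriv ρ) := hc.deriv
  have hc2 : HasCompactSupport (deriv (deriv ρ)) := hc1.deriv
  set b : ℝ → ℝ → ℝ := fun s x => cvE (deriv ρ) (G s) x + a * cvE (deriv (deriv ρ)) (W s) x with hb
  set u : ℝ → ℝ → ℝ := fun s x => cvE ρ (W s) x with hu
  have hU : ∀ t ∈ Ioc 0 T, ∀ x, u t x = ∫ s in (0:ℝ)..t, b s x := by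
    intro t ht x
    have hφ : ContDiff ℝ (⊤ : ℕ∞) (fun y => ρ (x - y)) := hρ.comp (by fun_prop)
    have hφc : HasCompactSupport (fun y => ρ (x - y)) :=
      hc.comp_homeomorph (Homeomorph.subLeft x)
    have h := hweak t ht _ hφ hφc
    have d1 : deriv (fun y => ρ (x - y)) = fun y => -(deriv ρ (x - y)) := by
      ext y; exact deriv_comp_const_sub ..
    have d2 : deriv (fun y => -(deriv ρ (x - y))) = fun y => deriv (deriv ρ) (x - y) := by
      ext y
      have := deriv_comp_const_sub (deriv ρ) x y
      rw [deriv.fun_neg, this, neg_neg]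
    rw [d1, d2, ← cvE_swap] at h
    rw [hu]
    simp only [h]
    congr 1
    ext s
    simp only [hb, cvE_swap, mul_neg, integral_neg, neg_neg]
  have mu : Measurable (fun p : ℝ × ℝ => u p.1 p.2) := cvE_meas hW hρ.continuous
  have mg : Measurable (fun p : ℝ × ℝ => cvE ρ (G p.1) p.2) := cvE_meas hG hρ.continuous
  have mb : Measurable (fun p : ℝ × ℝ => b p.1 p.2) :=
    (cvE_meas hG hρ1.continuous).add ((cvE_meas hW hρ2.continuous).const_mul a)
  have bu := fun s => cvE_bound (cont_cs_int hρ.continuous hc) (bW s)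
  have bu1 := fun s => cvE_bound (cont_cs_int hρ1.continuous hc1) (bW s)
  have bu2 := fun s => cvE_bound (cont_cs_int hρ2.continuous hc2) (bW s)
  have bg := fun s => cvE_bound (cont_cs_int hρ.continuous hc) (bG s)
  have bg1 := fun s => cvE_bound (cont_cs_int hρ1.continuous hc1) (bG s)
  have bb : ∀ s x, |b s x| ≤ N * (∫ t, |deriv ρ t|) + a * (M * ∫ t, |deriv (deriv ρ) t|) := by
    intro s x
    refine (abs_add_le _ _).trans (add_le_add (bg1 s x) ?_)
    rw [abs_mul, abs_of_pos ha]
    exact mul_le_mul_of_nonneg_left (bu2 s x) ha.le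
  obtain ⟨B, hBu, hBu1, hBg, hBb⟩ : ∃ B, (∀ s x, |u s x| ≤ B) ∧
      (∀ s x, |cvE (deriv ρ) (W s) x| ≤ B) ∧ (∀ s x, |cvE ρ (G s) x| ≤ B) ∧
      (∀ s x, |b s x| ≤ B) := by
    refine ⟨max (max (M * ∫ t, |ρ t|) (M * ∫ t, |deriv ρ t|)) (max (N * ∫ t, |ρ t|)
      (N * (∫ t, |deriv ρ t|) + a * (M * ∫ t, |deriv (deriv ρ) t|))), ?_, ?_, ?_, ?_⟩
    · intro s x; exact (bu s x).trans (by simp)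
    · intro s x; exact (bu1 s x).trans (by simp)
    · intro s x; exact (bg s x).trans (by simp)
    · intro s x; exact (bb s x).trans (by simp)
  have hB : 0 ≤ B := (abs_nonneg _).trans (hBu 0 0)
  have hsq : ∀ x, u t x ^ 2 = ∫ s in (0:ℝ)..t, 2 * (u s x * b s x) := by
    intro x
    have ib : IntervalIntegrable (fun s => b s x) volume 0 t := by
      have : IntervalIntegrable (fun _ : ℝ => B) volume 0 t := intervalIntegrable_const
      refine this.mono_fun (mb.comp measurable_prodMk_right).aestronglyMeasurable ?_
      exact Filter.Eventually.of_forall fun s => (hBb s x).trans (le_abs_self B)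
    rw [hU t ht x, sq_integral ib]
    apply intervalIntegral.integral_congr_ae
    refine Filter.Eventually.of_forall fun s hs => ?_
    rw [uIoc_of_le ht.1.le] at hs
    rw [hU s ⟨hs.1, hs.2.trans ht.2⟩ x]
  have P1 : Integrable (fun p : ℝ × ℝ => (2 * (u p.1 p.2 * b p.1 p.2)) * etaE p.2)
      ((volume.restrict (uIoc 0 t)).prod volume) := by
    refine int_bdd_eta_prod (h := fun p => 2 * (u p.1 p.2 * b p.1 p.2)) ((mu.mul mb).const_mul 2)
      (B := 2 * (B * B)) (fun p => ?_) 0 t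
    rw [abs_mul, abs_mul, abs_of_pos (by norm_num : (0:ℝ) < 2)]
    exact mul_le_mul_of_nonneg_left
      (mul_le_mul (hBu _ _) (hBb _ _) (abs_nonneg _) hB) (by norm_num)
  have P2 : Integrable (fun p : ℝ × ℝ => (u p.1 p.2 ^ 2 + cvE ρ (G p.1) p.2 ^ 2) * etaE p.2)
      ((volume.restrict (uIoc 0 t)).prod volume) := by
    refine int_bdd_eta_prod (h := fun p => u p.1 p.2 ^ 2 + cvE ρ (G p.1) p.2 ^ 2)
      ((mu.pow_const 2).add (mg.pow_const 2)) (B := B ^ 2 + B ^ 2) (fun p => ?_) 0 t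
    rw [abs_of_nonneg (by positivity)]
    exact add_le_add (sq_le_sq.2 ((hBu _ _).trans (le_abs_self B)))
      (sq_le_sq.2 ((hBg _ _).trans (le_abs_self B)))
  have e1 : ∫ x, (u t x) ^ 2 * etaE x =
      ∫ s in (0:ℝ)..t, ∫ x, (2 * (u s x * b s x)) * etaE x := by
    rw [intervalIntegral_integral_swap P1]
    congr 1; ext x
    rw [hsq x, intervalIntegral.integral_mul_const]
  rw [e1, ← intervalIntegral.integral_const_mul]
  apply intervalIntegral.integral_mono_on ht.1.le
  · have := P1.integral_prod_left
    exact intervalIntegrable_iff.2 this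
  · have := (P2.integral_prod_left).const_mul (2 * (1 / (2 * a) + a / 2 + 1 / 2))
    exact intervalIntegrable_iff.2 this
  intro s _
  have lW := bdd_locInt (meas_slice hW s) (bW s)
  have lG := bdd_locInt (meas_slice hG s) (bG s)
  have c1 : ContDiff ℝ 1 ρ := hρ.of_le (by exact_mod_cast le_top)
  have c2 : ContDiff ℝ 1 (deriv ρ) := hρ1.of_le (by exact_mod_cast le_top)
  have key := ibp_ineq ha (u := u s) (u' := cvE (deriv ρ) (W s)) (g := cvE ρ (G s)) (F' := b s)
    (fun x => cvE_deriv c1 hc lW x)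
    (fun x => (cvE_deriv c1 hc lG x).add ((cvE_deriv c2 hc1 lW x).const_mul a))
    (mu.comp measurable_prodMk_left)
    ((cvE_meas hW hρ1.continuous).comp (measurable_prodMk_left (x := s)))
    (mg.comp (measurable_prodMk_left (x := s))) (mb.comp measurable_prodMk_left)
    (hBu s) (hBu1 s) (hBg s) (hBb s)
  calc ∫ x, (2 * (u s x * b s x)) * etaE x = 2 * ∫ x, (u s x * b s x) * etaE x := by
        rw [← integral_const_mul]; congr 1; ext x; ring
    _ ≤ 2 * ((1 / (2 * a) + a / 2 + 1 / 2) * ∫ x, (u s x ^ 2 + cvE ρ (G s) x ^ 2) * etaE x) := by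
        linarith
    _ = _ := by ring

noncomputable def bumpE (n : ℕ) : ContDiffBump (0:ℝ) :=
  ⟨1 / ((n:ℝ) + 1), 2 / ((n:ℝ) + 1), by positivity, by gcongr; norm_num⟩

noncomputable def rhoE (n : ℕ) : ℝ → ℝ := (bumpE n).normed volume

lemma rhoE_tendsto {h : ℝ → ℝ} (hh : LocallyIntegrable h) :
    ∀ᵐ x, Filter.Tendsto (fun n => cvE (rhoE n) h x) Filter.atTop (𝓝 (h x)) := by
  have := ContDiffBump.ae_convolution_tendsto_right_of_locallyIntegrable (φ := bumpE)
    (l := Filter.atTop) (K := 2) (g := h) (μ := volume) ?_ ?_ hh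
  · simpa only [cvE_eq, rhoE] using this
  · have h1 := (tendsto_one_div_add_atTop_nhds_zero_nat (𝕜 := ℝ)).const_mul 2
    simp only [mul_zero] at h1
    refine h1.congr fun n => ?_
    simp only [bumpE]; ring
  · refine Filter.Eventually.of_forall fun n => le_of_eq ?_
    simp only [bumpE]; ring

lemma rhoE_bound {h : ℝ → ℝ} {M : ℝ} (hM : ∀ x, |h x| ≤ M) (n : ℕ) (x : ℝ) :
    |cvE (rhoE n) h x| ≤ M := by
  have h1 := cvE_bound (k := rhoE n) (bumpE n).integrable_normed hM x
  have h2 : ∫ t, |rhoE n t| = 1 := by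
    rw [← (bumpE n).integral_normed (μ := volume)]
    congr 1; ext t
    exact abs_of_nonneg ((bumpE n).nonneg_normed t)
  rwa [h2, mul_one] at h1

lemma lim_sq {h k : ℝ → ℝ} {M N : ℝ} (hm : Measurable h) (hM : ∀ x, |h x| ≤ M)
    (km : Measurable k) (kM : ∀ x, |k x| ≤ N) :
    Filter.Tendsto (fun n => ∫ x, ((cvE (rhoE n) h x) ^ 2 + (cvE (rhoE n) k x) ^ 2) * etaE x)
      Filter.atTop (𝓝 (∫ x, (h x ^ 2 + k x ^ 2) * etaE x)) := by
  have mc : ∀ {h : ℝ → ℝ}, Measurable h → ∀ n, Measurable (cvE (rhoE n) h) := fun {h} hm n =>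
    (cvE_meas (W := fun _ => h) (hm.comp measurable_snd) (bumpE n).continuous_normed).comp
      (measurable_prodMk_left (x := (0:ℝ)))
  apply tendsto_integral_of_dominated_convergence (fun x => (M ^ 2 + N ^ 2) * etaE x)
  · intro n
    exact ((((mc hm n).pow_const 2).add ((mc km n).pow_const 2)).mul etaE_meas).aestronglyMeasurable
  · exact etaE_int.const_mul _
  · intro n
    refine Filter.Eventually.of_forall fun x => ?_
    have he := etaE_pos x
    rw [Real.norm_of_nonneg (by positivity)]
    refine mul_le_mul_of_nonneg_right (add_le_add ?_ ?_) he.le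
    · exact sq_le_sq.2 ((rhoE_bound hM n x).trans (le_abs_self _))
    · exact sq_le_sq.2 ((rhoE_bound kM n x).trans (le_abs_self _))
  · filter_upwards [rhoE_tendsto (bdd_locInt hm hM), rhoE_tendsto (bdd_locInt km kM)] with x h1 h2
    exact ((h1.pow 2).add (h2.pow 2)).mul_const _

lemma coreE {a : ℝ} (ha : 0 < a) {T M L : ℝ} {W G : ℝ → ℝ → ℝ} (hL : 0 ≤ L)
    (hW : Measurable (Function.uncurry W)) (hG : Measurable (Function.uncurry G))
    (bW : ∀ s x, |W s x| ≤ M) (bG : ∀ s x, |G s x| ≤ L * |W s x|)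
    (hweak : ∀ t ∈ Ioc 0 T, ∀ φ : ℝ → ℝ, ContDiff ℝ (⊤ : ℕ∞) φ → HasCompactSupport φ →
      ∫ y, W t y * φ y = ∫ s in (0:ℝ)..t,
        (-(∫ y, G s y * deriv φ y) + a * ∫ y, W s y * deriv (deriv φ) y))
    {t : ℝ} (ht : t ∈ Ioc 0 T) : ∀ᵐ x, W t x = 0 := by
  have bG' : ∀ s x, |G s x| ≤ L * M := fun s x =>
    (bG s x).trans (mul_le_mul_of_nonneg_left (bW s x) hL)
  set C := 2 * (1 / (2 * a) + a / 2 + 1 / 2) with hC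
  have hC0 : 0 ≤ C := by positivity
  set E := ∫ x, etaE x with hE
  have mS := meas_slice hW
  have mSG := meas_slice hG
  have hIW : ∀ s, Integrable (fun x => W s x ^ 2 * etaE x) := fun s =>
    int_bdd_eta ((mS s).pow_const 2) (B := M ^ 2) fun x => by
      rw [abs_of_nonneg (by positivity)]
      exact sq_le_sq.2 ((bW _ _).trans (le_abs_self _))
  have hIG : ∀ s, Integrable (fun x => (W s x ^ 2 + G s x ^ 2) * etaE x) := fun s =>
    int_bdd_eta (((mS s).pow_const 2).add ((mSG s).pow_const 2)) (B := M ^ 2 + (L * M) ^ 2)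
      fun x => by
        rw [abs_of_nonneg (by positivity)]
        exact add_le_add (sq_le_sq.2 ((bW _ _).trans (le_abs_self _)))
          (sq_le_sq.2 ((bG' _ _).trans (le_abs_self _)))
  have hle : ∀ t ∈ Ioc 0 T, ∫ x, W t x ^ 2 * etaE x ≤
      C * ∫ s in (0:ℝ)..t, ∫ x, (W s x ^ 2 + G s x ^ 2) * etaE x := by
    intro t ht
    have l1 := lim_sq (mS t) (bW t) (measurable_const (a := (0:ℝ))) (N := 0) (by simp)
    have z : ∀ n x, cvE (rhoE n) (fun _ => (0:ℝ)) x = 0 := fun n x => by simp [cvE]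
    simp only [z, ne_eq, OfNat.ofNat_ne_zero, not_false_eq_true, zero_pow, add_zero] at l1
    have l2 : Filter.Tendsto (fun n => ∫ s in (0:ℝ)..t,
        ∫ x, ((cvE (rhoE n) (W s) x) ^ 2 + (cvE (rhoE n) (G s) x) ^ 2) * etaE x) Filter.atTop
        (𝓝 (∫ s in (0:ℝ)..t, ∫ x, (W s x ^ 2 + G s x ^ 2) * etaE x)) := by
      apply intervalIntegral.tendsto_integral_filter_of_dominated_convergence
        (fun _ => (M ^ 2 + (L * M) ^ 2) * E)
      · refine Filter.Eventually.of_forall fun n => ?_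
        have m : Measurable (Function.uncurry fun s x => ((cvE (rhoE n) (W s) x) ^ 2 +
            (cvE (rhoE n) (G s) x) ^ 2) * etaE x) :=
          ((((cvE_meas hW (bumpE n).continuous_normed).pow_const 2).add
            ((cvE_meas hG (bumpE n).continuous_normed).pow_const 2)).mul
            (etaE_meas.comp measurable_snd))
        exact m.stronglyMeasurable.integral_prod_right.aestronglyMeasurable
      · refine Filter.Eventually.of_forall fun n => Filter.Eventually.of_forall fun s _ => ?_
        rw [hE, ← integral_const_mul]
        refine norm_integral_le_of_norm_le (etaE_int.const_mul _)
          (Filter.Eventually.of_forall fun x => ?_)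
        have he := etaE_pos x
        rw [Real.norm_of_nonneg (by positivity)]
        refine mul_le_mul_of_nonneg_right (add_le_add ?_ ?_) he.le
        · exact sq_le_sq.2 ((rhoE_bound (bW s) n x).trans (le_abs_self _))
        · exact sq_le_sq.2 ((rhoE_bound (bG' s) n x).trans (le_abs_self _))
      · exact intervalIntegrable_const
      · exact Filter.Eventually.of_forall fun s _ => lim_sq (mS s) (bW s) (mSG s) (bG' s)
    refine le_of_tendsto_of_tendsto' l1 (l2.const_mul C) fun n => ?_
    exact mollified ha hW hG bW bG' hweak (bumpE n).contDiff_normed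
      (bumpE n).hasCompactSupport_normed ht
  set y : ℝ → ℝ := fun s => ∫ x, W s x ^ 2 * etaE x with hy
  have my : Measurable y := by
    have m : Measurable (Function.uncurry fun s x => W s x ^ 2 * etaE x) :=
      (hW.pow_const 2).mul (etaE_meas.comp measurable_snd)
    exact m.stronglyMeasurable.integral_prod_right.measurable
  have hy0 : ∀ s, 0 ≤ y s := fun s => integral_nonneg fun x =>
    mul_nonneg (sq_nonneg _) (etaE_pos x).le
  have hyM : ∀ s, y s ≤ M ^ 2 * E := fun s => by
    rw [hE, ← integral_const_mul]
    refine integral_mono (hIW s) (etaE_int.const_mul _) fun x => ?_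
    exact mul_le_mul_of_nonneg_right (sq_le_sq.2 ((bW _ _).trans (le_abs_self _))) (etaE_pos x).le
  have hgr : ∀ t ∈ Ioc 0 T, y t ≤ (C * (1 + L ^ 2)) * ∫ s in (0:ℝ)..t, y s := by
    intro t ht
    refine (hle t ht).trans ?_
    rw [mul_assoc C]
    refine mul_le_mul_of_nonneg_left ?_ hC0
    rw [← intervalIntegral.integral_const_mul]
    have ic : IntervalIntegrable (fun s => (1 + L ^ 2) * y s) volume 0 t := by
      have : IntervalIntegrable (fun _ : ℝ => M ^ 2 * E) volume 0 t := intervalIntegrable_const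
      refine (this.mono_fun my.aestronglyMeasurable
        (Filter.Eventually.of_forall fun s => ?_)).const_mul _
      beta_reduce
      rw [Real.norm_of_nonneg (hy0 s)]
      exact (hyM s).trans (le_abs_self _)
    rw [intervalIntegral.integral_of_le ht.1.le, intervalIntegral.integral_of_le ht.1.le]
    apply integral_mono_of_nonneg
    · exact Filter.Eventually.of_forall fun s => integral_nonneg fun x =>
        mul_nonneg (by positivity) (etaE_pos x).le
    · exact ic.1
    · refine Filter.Eventually.of_forall fun s => ?_
      simp only [hy]
      rw [← integral_const_mul]
      refine integral_mono (hIG s) ((hIW s).const_mul _) fun x => ?_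
      have he := etaE_pos x
      have : G s x ^ 2 ≤ L ^ 2 * W s x ^ 2 := by
        rw [← mul_pow]
        refine sq_le_sq.2 ?_
        rw [abs_mul, abs_of_nonneg hL]; exact bG s x
      simp only
      nlinarith [mul_le_mul_of_nonneg_right this he.le]
  have h0 := gronwallE (fun t _ => hyM t) (by positivity) hy0 hgr t ht
  have h1 := (integral_eq_zero_iff_of_nonneg (fun x =>
    mul_nonneg (sq_nonneg _) (etaE_pos x).le) (hIW t)).1 h0
  filter_upwards [h1] with x hx
  have := (mul_eq_zero.1 hx).resolve_right (etaE_pos x).ne'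
  exact pow_eq_zero_iff (two_ne_zero) |>.1 this

lemma reflE {h k : ℝ → ℝ} {B : ℝ} (ε : ℝ) (hm : Measurable h) (hB : ∀ x, |h x| ≤ B)
    (hk : Continuous k) (hc : HasCompactSupport k) :
    ∫ y, (if 0 ≤ y then h y else ε * h (-y)) * k y
      = ∫ y in Ici (0:ℝ), h y * (k y + ε * k (-y)) := by
  have ik : Integrable k := cont_cs_int hk hc
  have ik' : Integrable (fun y => k (-y)) := ik.comp_neg
  have i1 : Integrable (fun y => h y * k y) :=
    ik.bdd_mul hm.aestronglyMeasurable (Filter.Eventually.of_forall hB)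
  have i2 : Integrable (fun y => h y * k (-y)) :=
    ik'.bdd_mul hm.aestronglyMeasurable (Filter.Eventually.of_forall hB)
  have i3 : Integrable (fun y => h (-y) * k y) := by simpa using i2.comp_neg
  have iF : Integrable (fun y => (if 0 ≤ y then h y else ε * h (-y)) * k y) := by
    have : (fun y => (if 0 ≤ y then h y else ε * h (-y)) * k y) =
        (Ici (0:ℝ)).piecewise (fun y => h y * k y) (fun y => ε * (h (-y) * k y)) := by
      ext y
      by_cases hy : 0 ≤ y
      · simp [Set.piecewise, hy]
      · simp [Set.piecewise, hy]; ring
    rw [this]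
    exact Integrable.piecewise measurableSet_Ici i1.integrableOn (i3.const_mul ε).integrableOn
  rw [← integral_add_compl (measurableSet_Ioi (a := (0:ℝ))) iF, compl_Ioi]
  have e1 : ∫ y in Iic (0:ℝ), (if 0 ≤ y then h y else ε * h (-y)) * k y
      = ∫ y in Ioi (0:ℝ), ε * (h y * k (-y)) := by
    have := integral_comp_neg_Ioi (0:ℝ) (fun y => (if 0 ≤ y then h y else ε * h (-y)) * k y)
    rw [neg_zero] at this
    rw [← this]
    refine setIntegral_congr_fun measurableSet_Ioi fun y hy => ?_
    have : ¬ (0 ≤ -y) := by simp only [mem_Ioi] at hy; linarith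
    simp only [this, if_false, neg_neg]; ring
  have e2 : ∫ y in Ioi (0:ℝ), (if 0 ≤ y then h y else ε * h (-y)) * k y
      = ∫ y in Ioi (0:ℝ), h y * k y := by
    refine setIntegral_congr_fun measurableSet_Ioi fun y hy => ?_
    have : (0 ≤ y) := le_of_lt hy
    simp only [this, if_true]
  rw [e1, e2, ← integral_add i1.integrableOn (i2.const_mul ε).integrableOn,
    integral_Ici_eq_integral_Ioi]
  refine setIntegral_congr_fun measurableSet_Ioi fun y _ => ?_
  ring

lemma ii_help {H : ℝ → ℝ → ℝ} {B : ℝ} (hm : Measurable (Function.uncurry H))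
    (hB : ∀ s x, |H s x| ≤ B) {k : ℝ → ℝ} (hk : Continuous k) (hc : HasCompactSupport k) (t : ℝ) :
    IntervalIntegrable (fun s => ∫ x in Ici (0:ℝ), H s x * k x) volume 0 t := by
  have ik : Integrable k := cont_cs_int hk hc
  have : IntervalIntegrable (fun _ : ℝ => ∫ x in Ici (0:ℝ), B * |k x|) volume 0 t :=
    intervalIntegrable_const
  refine this.mono_fun ?_ (Filter.Eventually.of_forall fun s => ?_)
  · have m : Measurable (Function.uncurry fun s x => H s x * k x) :=
      hm.mul (hk.measurable.comp measurable_snd)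
    exact m.stronglyMeasurable.integral_prod_right.aestronglyMeasurable
  · refine le_trans ?_ (le_abs_self _)
    refine norm_integral_le_of_norm_le (ik.abs.const_mul B).integrableOn
      (Filter.Eventually.of_forall fun x => ?_)
    rw [norm_mul]
    exact mul_le_mul_of_nonneg_right (hB s x) (norm_nonneg _)

noncomputable def cutE (v : ℝ → ℝ → ℝ) (c T : ℝ) (s x : ℝ) : ℝ :=
  if (s ∈ Icc 0 T ∧ |v x s| ≤ c) then v x s else 0

lemma cutE_meas {v : ℝ → ℝ → ℝ} (hv : Measurable (Function.uncurry v)) (c T : ℝ) :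
    Measurable (Function.uncurry (cutE v c T)) := by
  have h1 : Measurable (fun p : ℝ × ℝ => v p.2 p.1) := hv.comp measurable_swap
  refine Measurable.ite ?_ h1 measurable_const
  exact (measurable_fst measurableSet_Icc).inter (measurableSet_le h1.abs measurable_const)

lemma cutE_bound {v : ℝ → ℝ → ℝ} {c : ℝ} (hc : 0 ≤ c) (T s x : ℝ) : |cutE v c T s x| ≤ c := by
  unfold cutE
  split_ifs with h
  · exact h.2
  · simpa using hc

lemma weak_cut {a : ℝ} {f v₀ : ℝ → ℝ} {v : ℝ → ℝ → ℝ}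
    (h : IsWeakSolutionE a f v₀ v) {c T : ℝ}
    (hc : ∀ s ∈ Icc (0:ℝ) T, ∀ᵐ x ∂(volume.restrict (Ici (0:ℝ))), |v x s| ≤ c)
    {t : ℝ} (ht : t ∈ Ioc 0 T) {ψ : ℝ → ℝ} (hψ : ContDiff ℝ (⊤ : ℕ∞) ψ)
    (hψc : HasCompactSupport ψ) (hψ0 : ψ 0 = 0) :
    (∫ x in Ici (0:ℝ), cutE v c T t x * ψ x) - (∫ x in Ici (0:ℝ), v₀ x * ψ x)
      = -(∫ s in (0:ℝ)..t, ∫ x in Ici (0:ℝ), f (cutE v c T s x) * deriv ψ x)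
        + a * (∫ s in (0:ℝ)..t, ∫ x in Ici (0:ℝ), cutE v c T s x * deriv (deriv ψ) x)
        + a * deriv ψ 0 * t := by
  have hcut : ∀ s ∈ Icc (0:ℝ) T, ∀ᵐ x ∂(volume.restrict (Ici (0:ℝ))), cutE v c T s x = v x s := by
    intro s hs
    filter_upwards [hc s hs] with x hx
    exact if_pos ⟨hs, hx⟩
  have hsub : ∀ s ∈ uIcc 0 t, s ∈ Icc 0 T := fun s hs => by
    rw [uIcc_of_le ht.1.le] at hs
    exact ⟨hs.1, hs.2.trans ht.2⟩
  have e0 : ∫ x in Ici (0:ℝ), cutE v c T t x * ψ x = ∫ x in Ici (0:ℝ), v x t * ψ x := by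
    apply integral_congr_ae
    filter_upwards [hcut t ⟨ht.1.le, ht.2⟩] with x hx
    rw [hx]
  have e1 : ∫ s in (0:ℝ)..t, ∫ x in Ici (0:ℝ), f (cutE v c T s x) * deriv ψ x =
      ∫ s in (0:ℝ)..t, ∫ x in Ici (0:ℝ), f (v x s) * deriv ψ x := by
    apply intervalIntegral.integral_congr
    intro s hs
    apply integral_congr_ae
    filter_upwards [hcut s (hsub s hs)] with x hx
    rw [hx]
  have e2 : ∫ s in (0:ℝ)..t, ∫ x in Ici (0:ℝ), cutE v c T s x * deriv (deriv ψ) x =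
      ∫ s in (0:ℝ)..t, ∫ x in Ici (0:ℝ), v x s * deriv (deriv ψ) x := by
    apply intervalIntegral.integral_congr
    intro s hs
    apply integral_congr_ae
    filter_upwards [hcut s (hsub s hs)] with x hx
    rw [hx]
  rw [e0, e1, e2]
  exact h.2.2.2 t ht.1 ψ hψ hψc hψ0

/-- Uniqueness of weak solutions to (E): any two weak solutions agree a.e. on `[0,∞)`
at each positive time. -/
theorem uniqueness_of_weak_solutions
    (a : ℝ) (ha : 0 < a) (f : ℝ → ℝ) (hf : ContDiff ℝ (⊤ : ℕ∞) f)
    (v₀ : ℝ → ℝ) (hv₀int : IntegrableOn v₀ (Ici (0:ℝ)))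
    (hv₀bdd : ∃ C : ℝ, ∀ᵐ x ∂(volume.restrict (Ici (0:ℝ))), |v₀ x| ≤ C)
    (v₁ v₂ : ℝ → ℝ → ℝ)
    (h₁ : IsWeakSolutionE a f v₀ v₁) (h₂ : IsWeakSolutionE a f v₀ v₂) :
    ∀ t : ℝ, 0 < t →
      ∀ᵐ x ∂(volume.restrict (Ici (0:ℝ))), v₁ x t = v₂ x t := by
  intro T hT
  obtain ⟨C₁, hC₁⟩ := h₁.2.2.1 T
  obtain ⟨C₂, hC₂⟩ := h₂.2.2.1 T
  set c := max |C₁| |C₂| with hcdef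
  have hc0 : 0 ≤ c := (abs_nonneg _).trans (le_max_left _ _)
  have hc1 : ∀ s ∈ Icc (0:ℝ) T, ∀ᵐ x ∂(volume.restrict (Ici (0:ℝ))), |v₁ x s| ≤ c := by
    intro s hs
    filter_upwards [(hC₁ s hs).1] with x hx
    exact hx.trans ((le_abs_self _).trans (le_max_left _ _))
  have hc2 : ∀ s ∈ Icc (0:ℝ) T, ∀ᵐ x ∂(volume.restrict (Ici (0:ℝ))), |v₂ x s| ≤ c := by
    intro s hs
    filter_upwards [(hC₂ s hs).1] with x hx
    exact hx.trans ((le_abs_self _).trans (le_max_right _ _))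
  set p := cutE v₁ c T with hp
  set q := cutE v₂ c T with hq
  have mp : Measurable (Function.uncurry p) := cutE_meas h₁.1 c T
  have mq : Measurable (Function.uncurry q) := cutE_meas h₂.1 c T
  have bp : ∀ s x, |p s x| ≤ c := cutE_bound hc0 T
  have bq : ∀ s x, |q s x| ≤ c := cutE_bound hc0 T
  have fm : Measurable f := hf.continuous.measurable
  obtain ⟨L, hL⟩ : ∃ L : NNReal, LipschitzOnWith L f (Icc (-c) c) :=
    (hf.contDiffOn (s := Icc (-c) c)).exists_lipschitzOnWith (by simp) (convex_Icc _ _)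
      isCompact_Icc
  obtain ⟨Bf, hBf⟩ : ∃ B, ∀ y ∈ Icc (-c) c, |f y| ≤ B := by
    obtain ⟨B, hB⟩ := isCompact_Icc.exists_bound_of_continuousOn
      (hf.continuous.continuousOn (s := Icc (-c) c))
    exact ⟨B, hB⟩
  have ip : ∀ s x, p s x ∈ Icc (-c) c := fun s x => abs_le.1 (bp s x)
  have iq : ∀ s x, q s x ∈ Icc (-c) c := fun s x => abs_le.1 (bq s x)
  set w : ℝ → ℝ → ℝ := fun s x => p s x - q s x with hw
  set g : ℝ → ℝ → ℝ := fun s x => f (p s x) - f (q s x) with hg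
  have mw : Measurable (Function.uncurry w) := mp.sub mq
  have mfp : Measurable (Function.uncurry fun s x => f (p s x)) := fm.comp mp
  have mfq : Measurable (Function.uncurry fun s x => f (q s x)) := fm.comp mq
  have mg : Measurable (Function.uncurry g) := mfp.sub mfq
  have bw : ∀ s x, |w s x| ≤ c + c := fun s x =>
    (abs_sub _ _).trans (add_le_add (bp s x) (bq s x))
  have bg : ∀ s x, |g s x| ≤ L * |w s x| := fun s x => by
    have := hL.dist_le_mul _ (ip s x) _ (iq s x)
    simpa [Real.dist_eq] using this
  have bg' : ∀ s x, |g s x| ≤ L * (c + c) := fun s x =>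
    (bg s x).trans (mul_le_mul_of_nonneg_left (bw s x) L.2)
  set W : ℝ → ℝ → ℝ := fun s x => if 0 ≤ x then w s x else (-1) * w s (-x) with hW
  set G : ℝ → ℝ → ℝ := fun s x => if 0 ≤ x then g s x else 1 * g s (-x) with hG
  have mneg : Measurable (fun r : ℝ × ℝ => (r.1, -r.2)) := by fun_prop
  have mW : Measurable (Function.uncurry W) :=
    Measurable.ite (measurable_snd measurableSet_Ici) mw ((mw.comp mneg).const_mul (-1))
  have mG : Measurable (Function.uncurry G) :=
    Measurable.ite (measurable_snd measurableSet_Ici) mg ((mg.comp mneg).const_mul 1)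
  have bW : ∀ s x, |W s x| ≤ c + c := fun s x => by
    simp only [hW]
    split_ifs
    · exact bw s x
    · simpa using bw s (-x)
  have bG : ∀ s x, |G s x| ≤ L * |W s x| := fun s x => by
    simp only [hW, hG]
    split_ifs
    · exact bg s x
    · simpa using bg s (-x)
  have key := coreE ha (T := T) L.2 mW mG bW bG ?_ (t := T) ⟨hT, le_rfl⟩
  · have key' := ae_restrict_of_ae (s := Ici (0:ℝ)) key
    have hTm : T ∈ Icc (0:ℝ) T := ⟨hT.le, le_rfl⟩
    filter_upwards [key', hc1 T hTm, hc2 T hTm, ae_restrict_mem measurableSet_Ici]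
      with x hx h1 h2 hx0
    have hx0' : 0 ≤ x := hx0
    have e1 : p T x = v₁ x T := if_pos ⟨hTm, h1⟩
    have e2 : q T x = v₂ x T := if_pos ⟨hTm, h2⟩
    simp only [hW, hw, hx0', if_true, e1, e2] at hx
    linarith
  intro t ht φ hφ hφc
  have hφ1 : ContDiff ℝ (⊤ : ℕ∞) (deriv φ) := hφ.deriv'
  have hφ2 : ContDiff ℝ (⊤ : ℕ∞) (deriv (deriv φ)) := hφ1.deriv'
  set ψ : ℝ → ℝ := fun y => φ y + (-1) * φ (-y) with hψdef
  have hψ : ContDiff ℝ (⊤ : ℕ∞) ψ := hφ.add (contDiff_const.mul (hφ.comp contDiff_neg))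
  have hψc : HasCompactSupport ψ := by
    have : HasCompactSupport (fun y => φ (-y)) := hφc.comp_homeomorph (Homeomorph.neg ℝ)
    exact hφc.add this.mul_left
  have hψ0 : ψ 0 = 0 := by simp [hψdef]
  have d1 : deriv ψ = fun y => deriv φ y + 1 * deriv φ (-y) := by
    ext y
    have hd : Differentiable ℝ φ := hφ.differentiable (by simp)
    have h1 := (hd y).hasDerivAt
    have h2 := ((hd (-y)).hasDerivAt.comp y (hasDerivAt_neg y)).const_mul (-1)
    have h3 := (h1.add h2).deriv
    refine Eq.trans h3 ?_
    ring
  have d2 : deriv (deriv ψ) = fun y => deriv (deriv φ) y + (-1) * deriv (deriv φ) (-y) := by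
    rw [d1]
    ext y
    have hd : Differentiable ℝ (deriv φ) := hφ1.differentiable (by simp)
    have h1 := (hd y).hasDerivAt
    have h2 := ((hd (-y)).hasDerivAt.comp y (hasDerivAt_neg y)).const_mul 1
    have h3 := (h1.add h2).deriv
    refine Eq.trans h3 ?_
    ring
  have hψ1 : ContDiff ℝ (⊤ : ℕ∞) (deriv ψ) := hψ.deriv'
  have hψ2 : ContDiff ℝ (⊤ : ℕ∞) (deriv (deriv ψ)) := hψ1.deriv'
  have E1 := weak_cut h₁ hc1 ht hψ hψc hψ0
  have E2 := weak_cut h₂ hc2 ht hψ hψc hψ0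
  have rW : ∫ y, W t y * φ y = ∫ y in Ici (0:ℝ), w t y * ψ y :=
    reflE (-1) (meas_slice mw t) (bw t) hφ.continuous hφc
  have rG : ∀ s, ∫ y, G s y * deriv φ y = ∫ y in Ici (0:ℝ), g s y * deriv ψ y := fun s => by
    rw [d1]; exact reflE 1 (meas_slice mg s) (bg' s) hφ1.continuous hφc.deriv
  have rW2 : ∀ s, ∫ y, W s y * deriv (deriv φ) y =
      ∫ y in Ici (0:ℝ), w s y * deriv (deriv ψ) y := fun s => by
    rw [d2]; exact reflE (-1) (meas_slice mw s) (bw s) hφ2.continuous hφc.deriv.deriv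
  have ibd : ∀ {h k : ℝ → ℝ} {B : ℝ}, Measurable h → (∀ x, |h x| ≤ B) → Continuous k →
      HasCompactSupport k → IntegrableOn (fun x => h x * k x) (Ici (0:ℝ)) :=
    fun {h k B} hm hB hk hkc => ((cont_cs_int hk hkc).bdd_mul hm.aestronglyMeasurable
      (Filter.Eventually.of_forall hB)).integrableOn
  have bfp : ∀ s x, |f (p s x)| ≤ Bf := fun s x => hBf _ (ip s x)
  have bfq : ∀ s x, |f (q s x)| ≤ Bf := fun s x => hBf _ (iq s x)
  have s1 : ∫ y in Ici (0:ℝ), w t y * ψ y =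
      (∫ y in Ici (0:ℝ), p t y * ψ y) - ∫ y in Ici (0:ℝ), q t y * ψ y := by
    rw [← integral_sub (ibd (meas_slice mp t) (bp t) hψ.continuous hψc)
      (ibd (meas_slice mq t) (bq t) hψ.continuous hψc)]
    congr 1; ext y; simp only [hw]; ring
  have s2 : ∀ s, ∫ y in Ici (0:ℝ), g s y * deriv ψ y =
      (∫ y in Ici (0:ℝ), f (p s y) * deriv ψ y) - ∫ y in Ici (0:ℝ), f (q s y) * deriv ψ y := by
    intro s
    rw [← integral_sub (ibd (meas_slice mfp s) (bfp s) hψ1.continuous hψc.deriv)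
      (ibd (meas_slice mfq s) (bfq s) hψ1.continuous hψc.deriv)]
    congr 1; ext y; simp only [hg]; ring
  have s3 : ∀ s, ∫ y in Ici (0:ℝ), w s y * deriv (deriv ψ) y =
      (∫ y in Ici (0:ℝ), p s y * deriv (deriv ψ) y)
        - ∫ y in Ici (0:ℝ), q s y * deriv (deriv ψ) y := by
    intro s
    rw [← integral_sub (ibd (meas_slice mp s) (bp s) hψ2.continuous hψc.deriv.deriv)
      (ibd (meas_slice mq s) (bq s) hψ2.continuous hψc.deriv.deriv)]
    congr 1; ext y; simp only [hw]; ring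
  have I1 := ii_help mfp bfp hψ1.continuous hψc.deriv t
  have I2 := ii_help mfq bfq hψ1.continuous hψc.deriv t
  have I3 := ii_help mp bp hψ2.continuous hψc.deriv.deriv t
  have I4 := ii_help mq bq hψ2.continuous hψc.deriv.deriv t
  simp only [rW, rG, rW2, s1, s2, s3]
  have I12 : IntervalIntegrable (fun s => -((∫ y in Ici (0:ℝ), f (p s y) * deriv ψ y)
      - ∫ y in Ici (0:ℝ), f (q s y) * deriv ψ y)) volume 0 t := (I1.sub I2).neg
  rw [intervalIntegral.integral_add I12 ((I3.sub I4).const_mul a),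
    intervalIntegral.integral_neg, intervalIntegral.integral_const_mul,
    intervalIntegral.integral_sub I1 I2, intervalIntegral.integral_sub I3 I4]
  linarith
end

section
/- The function u_stat is a positive C^∞ function on [0,∞) with ∫₀^∞ u_stat(x)dx = 1 and ∫₀^∞ x² u_stat(x)dx < ∞. Moreover v_stat(x) = ∫_x^∞ u_stat(y)dy for all x ≥ 0, u_stat satisfies the stationary equation −[(bℓ v_stat^{ℓ−1} − c₁)u_stat]'(x) + a u_stat''(x) = 0 for all x > 0, and the boundary condition (c₁ − bℓ)u_stat(0) + a u_stat'(0) = 0 holds. -/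
open MeasureTheory Set Filter

/-- The constant `c₁ = −λρ + b`. -/
noncomputable def cOne (lam b ρ : ℝ) : ℝ := -lam * ρ + b

/-- The constant `α = b / c₁`. -/
noncomputable def alphaStat (lam b ρ : ℝ) : ℝ := b / cOne lam b ρ

/-- `w(x) = (1−α) e^{(c₁/a)(ℓ−1)x} + α`. -/
noncomputable def wStat (ℓ : ℕ) (lam a b ρ x : ℝ) : ℝ :=
  (1 - alphaStat lam b ρ) * Real.exp (cOne lam b ρ / a * ((ℓ:ℝ) - 1) * x)
    + alphaStat lam b ρ

/-- The stationary tail profile `v_stat(x) = w(x)^{−1/(ℓ−1)}`. -/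
noncomputable def vStat (ℓ : ℕ) (lam a b ρ x : ℝ) : ℝ :=
  wStat ℓ lam a b ρ x ^ (-(1:ℝ) / ((ℓ:ℝ) - 1))

/-- The stationary density
`u_stat(x) = (c₁/a)(1−α) e^{(c₁/a)(ℓ−1)x} w(x)^{−ℓ/(ℓ−1)}`. -/
noncomputable def uStat (ℓ : ℕ) (lam a b ρ x : ℝ) : ℝ :=
  (cOne lam b ρ / a) * (1 - alphaStat lam b ρ)
    * Real.exp (cOne lam b ρ / a * ((ℓ:ℝ) - 1) * x)
    * wStat ℓ lam a b ρ x ^ (-(ℓ:ℝ) / ((ℓ:ℝ) - 1))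

lemma auxAlpha {lam b ρ : ℝ} (hlam : 0 < lam) (hb : 0 < b) (hρ : ρ < 0) :
    0 < cOne lam b ρ ∧ 0 < alphaStat lam b ρ ∧ 0 < 1 - alphaStat lam b ρ ∧
      cOne lam b ρ * alphaStat lam b ρ = b := by
  have h1 : 0 < -lam * ρ := by nlinarith
  have hc : 0 < cOne lam b ρ := by unfold cOne; linarith
  refine ⟨hc, by unfold alphaStat; positivity, ?_, ?_⟩
  · have : alphaStat lam b ρ < 1 := by
      unfold alphaStat
      rw [div_lt_one hc]; unfold cOne; linarith
    linarith
  · unfold alphaStat; field_simp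

lemma auxWpos {lam b ρ : ℝ} (ℓ : ℕ) (a : ℝ) (hlam : 0 < lam) (hb : 0 < b) (hρ : ρ < 0) (x : ℝ) :
    0 < wStat ℓ lam a b ρ x := by
  obtain ⟨hc, h0, h1, -⟩ := auxAlpha hlam hb hρ
  unfold wStat; positivity

lemma auxWderiv (ℓ : ℕ) (lam a b ρ x : ℝ) :
    HasDerivAt (wStat ℓ lam a b ρ) (cOne lam b ρ / a * ((ℓ:ℝ) - 1) *
      ((1 - alphaStat lam b ρ) * Real.exp (cOne lam b ρ / a * ((ℓ:ℝ) - 1) * x))) x := by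
  have h := ((((hasDerivAt_id x).const_mul (cOne lam b ρ / a * ((ℓ:ℝ) - 1))).exp).const_mul
    (1 - alphaStat lam b ρ)).add_const (alphaStat lam b ρ)
  refine h.congr_deriv ?_
  simp; ring

lemma auxVderiv {lam b ρ : ℝ} (ℓ : ℕ) (hℓ : 2 ≤ ℓ) (a : ℝ)
    (hlam : 0 < lam) (hb : 0 < b) (hρ : ρ < 0) (x : ℝ) :
    HasDerivAt (vStat ℓ lam a b ρ) (-uStat ℓ lam a b ρ x) x := by
  have hl : (0:ℝ) < (ℓ:ℝ) - 1 := by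
    have : (2:ℝ) ≤ ℓ := by exact_mod_cast hℓ
    linarith
  have h := (auxWderiv ℓ lam a b ρ x).rpow_const (p := -(1:ℝ) / ((ℓ:ℝ) - 1))
    (Or.inl (auxWpos ℓ a hlam hb hρ x).ne')
  refine h.congr_deriv ?_
  have e : -(1:ℝ) / ((ℓ:ℝ) - 1) - 1 = -(ℓ:ℝ) / ((ℓ:ℝ) - 1) := by field_simp; ring
  rw [e]; unfold uStat
  field_simp

lemma auxUderiv {lam b ρ : ℝ} (ℓ : ℕ) (hℓ : 2 ≤ ℓ) {a : ℝ} (ha : 0 < a)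
    (hlam : 0 < lam) (hb : 0 < b) (hρ : ρ < 0) (x : ℝ) :
    HasDerivAt (uStat ℓ lam a b ρ)
      ((b * (ℓ:ℝ) * vStat ℓ lam a b ρ x ^ (ℓ - 1) - cOne lam b ρ)
            * uStat ℓ lam a b ρ x / a) x := by
  have hl : (0:ℝ) < (ℓ:ℝ) - 1 := by
    have : (2:ℝ) ≤ ℓ := by exact_mod_cast hℓ
    linarith
  obtain ⟨hc, h0, h1, hca⟩ := auxAlpha hlam hb hρ
  have hw := auxWpos ℓ a hlam hb hρ x
  have h := ((((hasDerivAt_id x).const_mul (cOne lam b ρ / a * ((ℓ:ℝ) - 1))).exp).const_mul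
    (cOne lam b ρ / a * (1 - alphaStat lam b ρ))).mul
    ((auxWderiv ℓ lam a b ρ x).rpow_const (p := -(ℓ:ℝ) / ((ℓ:ℝ) - 1)) (Or.inl hw.ne'))
  refine h.congr_deriv ?_
  have hv : vStat ℓ lam a b ρ x ^ (ℓ - 1) = (wStat ℓ lam a b ρ x)⁻¹ := by
    unfold vStat
    rw [← Real.rpow_natCast, ← Real.rpow_mul hw.le, Nat.cast_sub (by omega), Nat.cast_one,
      div_mul_cancel₀ _ hl.ne', Real.rpow_neg_one]
  rw [hv, Real.rpow_sub_one hw.ne']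
  unfold uStat
  simp only [id]
  have hE : (1 - alphaStat lam b ρ) * Real.exp (cOne lam b ρ / a * ((ℓ:ℝ) - 1) * x)
    = wStat ℓ lam a b ρ x - alphaStat lam b ρ := by unfold wStat; ring
  generalize wStat ℓ lam a b ρ x = W at *
  generalize Real.exp (cOne lam b ρ / a * ((ℓ:ℝ) - 1) * x) = E at *
  generalize W ^ (-(ℓ:ℝ) / ((ℓ:ℝ) - 1)) = P at *
  generalize cOne lam b ρ = c at *
  generalize alphaStat lam b ρ = α at *
  have hW : W = (1 - α) * E + α := by linarith
  subst hca
  field_simp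
  rw [hW]
  ring

lemma auxUpos {lam b ρ : ℝ} (ℓ : ℕ) {a : ℝ} (ha : 0 < a)
    (hlam : 0 < lam) (hb : 0 < b) (hρ : ρ < 0) (x : ℝ) : 0 < uStat ℓ lam a b ρ x := by
  obtain ⟨hc, h0, h1, hca⟩ := auxAlpha hlam hb hρ
  have hw := auxWpos ℓ a hlam hb hρ x
  unfold uStat; positivity

lemma auxUsmooth {lam b ρ : ℝ} (ℓ : ℕ) (a : ℝ)
    (hlam : 0 < lam) (hb : 0 < b) (hρ : ρ < 0) :
    ContDiff ℝ (⊤ : ℕ∞) (uStat ℓ lam a b ρ) := by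
  have hw := auxWpos ℓ a hlam hb hρ
  have hs : ContDiff ℝ (⊤ : ℕ∞) (wStat ℓ lam a b ρ) := by unfold wStat; fun_prop
  have h2 : ContDiff ℝ (⊤ : ℕ∞) (fun x => wStat ℓ lam a b ρ x ^ (-(ℓ:ℝ) / ((ℓ:ℝ) - 1))) :=
    hs.rpow_const_of_ne (fun x => (hw x).ne')
  unfold uStat
  exact ContDiff.mul (by fun_prop) h2

lemma auxVlim {lam b ρ : ℝ} (ℓ : ℕ) (hℓ : 2 ≤ ℓ) {a : ℝ} (ha : 0 < a)
    (hlam : 0 < lam) (hb : 0 < b) (hρ : ρ < 0) :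
    Tendsto (vStat ℓ lam a b ρ) atTop (nhds 0) := by
  have hl : (0:ℝ) < (ℓ:ℝ) - 1 := by
    have : (2:ℝ) ≤ ℓ := by exact_mod_cast hℓ
    linarith
  obtain ⟨hc, h0, h1, hca⟩ := auxAlpha hlam hb hρ
  have hk : 0 < cOne lam b ρ / a * ((ℓ:ℝ) - 1) := by positivity
  have hW : Tendsto (wStat ℓ lam a b ρ) atTop atTop :=
    tendsto_atTop_add_const_right _ _
      ((Real.tendsto_exp_atTop.comp (tendsto_id.const_mul_atTop hk)).const_mul_atTop h1)
  have := (tendsto_rpow_neg_atTop (y := 1 / ((ℓ:ℝ) - 1)) (by positivity)).comp hW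
  refine this.congr fun x => ?_
  simp [vStat, Function.comp, neg_div]

lemma auxTail {lam b ρ : ℝ} (ℓ : ℕ) (hℓ : 2 ≤ ℓ) {a : ℝ} (ha : 0 < a)
    (hlam : 0 < lam) (hb : 0 < b) (hρ : ρ < 0) (x : ℝ) :
    vStat ℓ lam a b ρ x = ∫ y in Ici x, uStat ℓ lam a b ρ y := by
  have := integral_Ioi_of_hasDerivAt_of_nonpos' (a := x) (l := 0)
    (fun y _ => auxVderiv ℓ hℓ a hlam hb hρ y)
    (fun y _ => (neg_lt_zero.2 (auxUpos ℓ ha hlam hb hρ y)).le)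
    (auxVlim ℓ hℓ ha hlam hb hρ)
  rw [integral_neg] at this
  rw [integral_Ici_eq_integral_Ioi]
  linarith

lemma auxMoment {lam b ρ : ℝ} (ℓ : ℕ) (hℓ : 2 ≤ ℓ) {a : ℝ} (ha : 0 < a)
    (hlam : 0 < lam) (hb : 0 < b) (hρ : ρ < 0) :
    IntegrableOn (fun x => x ^ 2 * uStat ℓ lam a b ρ x) (Ici (0:ℝ)) := by
  have hl : (0:ℝ) < (ℓ:ℝ) - 1 := by
    have : (2:ℝ) ≤ ℓ := by exact_mod_cast hℓ
    linarith
  obtain ⟨hc, h0, h1, hca⟩ := auxAlpha hlam hb hρ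
  rw [integrableOn_Ici_iff_integrableOn_Ioi]
  have hk : 0 < cOne lam b ρ / a := by positivity
  have hi := (integrableOn_rpow_mul_exp_neg_mul_rpow (p := 1) (s := 2) (b := cOne lam b ρ / a)
    (by norm_num) (by norm_num) hk).const_mul
    (cOne lam b ρ / a * (1 - alphaStat lam b ρ) *
      (1 - alphaStat lam b ρ) ^ (-(ℓ:ℝ) / ((ℓ:ℝ) - 1)))
  refine Integrable.mono' hi ?_ ?_
  · exact ((continuous_pow 2).mul
      (auxUsmooth ℓ a hlam hb hρ).continuous).aestronglyMeasurable
  · refine Filter.Eventually.of_forall fun x => ?_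
    have hu := auxUpos ℓ ha hlam hb hρ x
    rw [Real.norm_of_nonneg (by positivity)]
    simp only [Real.rpow_two, Real.rpow_one]
    have hle : wStat ℓ lam a b ρ x ^ (-(ℓ:ℝ) / ((ℓ:ℝ) - 1)) ≤
        ((1 - alphaStat lam b ρ) * Real.exp (cOne lam b ρ / a * ((ℓ:ℝ) - 1) * x))
          ^ (-(ℓ:ℝ) / ((ℓ:ℝ) - 1)) := by
      apply Real.rpow_le_rpow_of_nonpos (by positivity)
      · unfold wStat; linarith
      · rw [neg_div, neg_nonpos]; positivity
    rw [Real.mul_rpow h1.le (Real.exp_pos _).le, ← Real.exp_mul] at hle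
    have e : cOne lam b ρ / a * ((ℓ:ℝ) - 1) * x * (-(ℓ:ℝ) / ((ℓ:ℝ) - 1)) =
      -(cOne lam b ρ / a) * x - cOne lam b ρ / a * ((ℓ:ℝ) - 1) * x := by
      field_simp; ring
    rw [e, Real.exp_sub] at hle
    calc x ^ 2 * uStat ℓ lam a b ρ x ≤ x ^ 2 * ((cOne lam b ρ / a) * (1 - alphaStat lam b ρ)
            * Real.exp (cOne lam b ρ / a * ((ℓ:ℝ) - 1) * x) *
            ((1 - alphaStat lam b ρ) ^ (-(ℓ:ℝ) / ((ℓ:ℝ) - 1)) *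
              (Real.exp (-(cOne lam b ρ / a) * x) /
                Real.exp (cOne lam b ρ / a * ((ℓ:ℝ) - 1) * x)))) := by
          unfold uStat; gcongr
      _ = _ := by
          have := (Real.exp_pos (cOne lam b ρ / a * ((ℓ:ℝ) - 1) * x)).ne'
          generalize Real.exp (cOne lam b ρ / a * ((ℓ:ℝ) - 1) * x) = E at *
          field_simp

/-- `u_stat` is a positive smooth probability density on `[0,∞)` with finite second
moment, its tail function is `v_stat`, and it satisfies the stationary equation
`−[(bℓ v_stat^{ℓ−1} − c₁) u_stat]' + a u_stat'' = 0` together with the Robin boundary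
condition `(c₁ − bℓ) u_stat(0) + a u_stat'(0) = 0`. -/
theorem uStat_is_stationary_solution
    (ℓ : ℕ) (hℓ : 2 ≤ ℓ) (lam a b ρ : ℝ)
    (hlam : 0 < lam) (ha : 0 < a) (hb : 0 < b) (hρ : ρ < 0) :
    (∀ x ≥ (0:ℝ), 0 < uStat ℓ lam a b ρ x) ∧
    ContDiffOn ℝ (⊤ : ℕ∞) (uStat ℓ lam a b ρ) (Ici (0:ℝ)) ∧
    (∫ x in Ici (0:ℝ), uStat ℓ lam a b ρ x) = 1 ∧
    IntegrableOn (fun x => x ^ 2 * uStat ℓ lam a b ρ x) (Ici (0:ℝ)) ∧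
    (∀ x ≥ (0:ℝ), vStat ℓ lam a b ρ x = ∫ y in Ici x, uStat ℓ lam a b ρ y) ∧
    (∀ x > (0:ℝ),
      -(deriv (fun y =>
          (b * (ℓ:ℝ) * vStat ℓ lam a b ρ y ^ (ℓ - 1) - cOne lam b ρ)
            * uStat ℓ lam a b ρ y) x)
        + a * deriv (deriv (uStat ℓ lam a b ρ)) x = 0) ∧
    (cOne lam b ρ - b * (ℓ:ℝ)) * uStat ℓ lam a b ρ 0
      + a * deriv (uStat ℓ lam a b ρ) 0 = 0 := by
  have hd : deriv (uStat ℓ lam a b ρ) = fun y => (b * (ℓ:ℝ) * vStat ℓ lam a b ρ y ^ (ℓ - 1)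
      - cOne lam b ρ) * uStat ℓ lam a b ρ y / a :=
    funext fun y => (auxUderiv ℓ hℓ ha hlam hb hρ y).deriv
  have hv0 : vStat ℓ lam a b ρ 0 = 1 := by simp [vStat, wStat]
  refine ⟨fun x _ => auxUpos ℓ ha hlam hb hρ x, (auxUsmooth ℓ a hlam hb hρ).contDiffOn, ?_,
    auxMoment ℓ hℓ ha hlam hb hρ, fun x _ => auxTail ℓ hℓ ha hlam hb hρ x, fun x _ => ?_, ?_⟩
  · rw [← auxTail ℓ hℓ ha hlam hb hρ, hv0]
  · rw [hd, deriv_div_const]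
    field_simp
    ring
  · rw [hd]
    simp only [hv0, one_pow]
    field_simp
    ring
end

section
/- Suppose u ∈ C²([0,∞)) is nonnegative with ∫₀^∞ u(x)dx = 1 and ∫₀^∞ x²u(x)dx < ∞, and that, with v(x) = ∫_x^∞ u(y)dy, u satisfies −[(bℓ v^{ℓ−1} − c₁)u]'(x) + a u''(x) = 0 for all x > 0 and the boundary condition (c₁ − bℓ)u(0) + a u'(0) = 0. Then u = u_stat on [0,∞). -/
open MeasureTheory Set Filter

theorem const_of_deriv_zero_aux (f : ℝ → ℝ) (hc : ContinuousOn f (Ici 0))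
    (hd : ∀ x > (0:ℝ), HasDerivAt f 0 x) : ∀ x ≥ (0:ℝ), f x = f 0 := by
  intro x hx
  have hdiff : DifferentiableOn ℝ f (interior (Ici (0:ℝ))) := by
    rw [interior_Ici]
    exact fun y hy => (hd y hy).differentiableAt.differentiableWithinAt
  have hder : ∀ y ∈ interior (Ici (0:ℝ)), deriv f y = 0 := by
    rw [interior_Ici]
    exact fun y hy => (hd y hy).deriv
  have h1 := antitoneOn_of_deriv_nonpos (convex_Ici 0) hc hdiff (fun y hy => (hder y hy).le)
  have h2 := monotoneOn_of_deriv_nonneg (convex_Ici 0) hc hdiff (fun y hy => (hder y hy).ge)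
  exact le_antisymm (h1 self_mem_Ici hx hx) (h2 self_mem_Ici hx hx)

theorem linear_zero_aux (p g : ℝ → ℝ) (M : ℝ) (hc : ContinuousOn p (Ici 0))
    (hd : ∀ x > (0:ℝ), HasDerivAt p (g x * p x) x) (hg : ∀ x > (0:ℝ), g x ≤ M)
    (h0 : p 0 = 0) : ∀ x ≥ (0:ℝ), p x = 0 := by
  intro x hx
  have hD : ∀ y > (0:ℝ), HasDerivAt (fun y => p y ^ 2 * Real.exp (-(2 * M * y)))
      (2 * (g y - M) * (p y ^ 2 * Real.exp (-(2 * M * y)))) y := by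
    intro y hy
    have h1 : HasDerivAt (fun y : ℝ => Real.exp (-(2 * M * y)))
        (Real.exp (-(2 * M * y)) * (-(2 * M * 1))) y :=
      (((hasDerivAt_id y).const_mul (2 * M)).neg).exp
    refine (((hd y hy).pow 2).mul h1).congr_deriv ?_
    simp
    ring
  have hA := antitoneOn_of_deriv_nonpos (convex_Ici 0)
    (f := fun y => p y ^ 2 * Real.exp (-(2 * M * y)))
    ((hc.pow 2).mul (by fun_prop)) (by
      rw [interior_Ici]
      exact fun y hy => (hD y hy).differentiableAt.differentiableWithinAt) (by
      rw [interior_Ici]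
      intro y hy
      rw [(hD y hy).deriv]
      have h1 : 0 ≤ p y ^ 2 * Real.exp (-(2 * M * y)) := by positivity
      have h2 := hg y hy
      nlinarith)
  have h3 := hA self_mem_Ici hx hx
  simp only [h0] at h3
  have h4 : p x ^ 2 * Real.exp (-(2 * M * x)) ≤ 0 := by simpa using h3
  have h5 : p x ^ 2 ≤ 0 := by
    by_contra h
    push Not at h
    have := mul_pos h (Real.exp_pos (-(2 * M * x)))
    linarith
  have h6 : p x ^ 2 = 0 := le_antisymm h5 (sq_nonneg _)
  exact pow_eq_zero_iff (two_ne_zero) |>.1 h6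

/-- Uniqueness of the stationary solution: any nonnegative `C²([0,∞))` probability
density `u` with finite second moment satisfying, with `v(x) = ∫_x^∞ u(y)dy`, the
stationary equation `−[(bℓ v^{ℓ−1} − c₁)u]' + a u'' = 0` on `(0,∞)` and the boundary
condition `(c₁ − bℓ)u(0) + a u'(0) = 0`, coincides with `u_stat` on `[0,∞)`. -/
theorem stationary_solution_unique
    (ℓ : ℕ) (hℓ : 2 ≤ ℓ) (lam a b ρ : ℝ)
    (hlam : 0 < lam) (ha : 0 < a) (hb : 0 < b) (hρ : ρ < 0)
    (u : ℝ → ℝ)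
    (hreg : ContDiffOn ℝ 2 u (Ici (0:ℝ)))
    (hpos : ∀ x ≥ (0:ℝ), 0 ≤ u x)
    (hint : IntegrableOn u (Ici (0:ℝ)))
    (hmass : (∫ x in Ici (0:ℝ), u x) = 1)
    (hmom : IntegrableOn (fun x => x ^ 2 * u x) (Ici (0:ℝ)))
    (hode : ∀ x > (0:ℝ),
      -(derivWithin (fun y =>
          (b * (ℓ:ℝ) * (∫ z in Ici y, u z) ^ (ℓ - 1) - cOne lam b ρ) * u y)
          (Ici (0:ℝ)) x)
        + a * derivWithin (derivWithin u (Ici (0:ℝ))) (Ici (0:ℝ)) x = 0)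
    (hbc : (cOne lam b ρ - b * (ℓ:ℝ)) * u 0
      + a * derivWithin u (Ici (0:ℝ)) 0 = 0) :
    ∀ x ≥ (0:ℝ), u x = uStat ℓ lam a b ρ x := by
  obtain ⟨m, rfl⟩ : ∃ m : ℕ, ℓ = m + 2 := ⟨ℓ - 2, by omega⟩
  have hm1 : m + 2 - 1 = m + 1 := by omega
  rw [hm1] at hode
  have hc1 : 0 < cOne lam b ρ := by
    unfold cOne
    nlinarith [mul_pos hlam (neg_pos.2 hρ)]
  set c := cOne lam b ρ with hcdef
  have hbc' : b < c := by
    rw [hcdef]; unfold cOne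
    nlinarith [mul_pos hlam (neg_pos.2 hρ)]
  -- the extended density
  have hucont : ContinuousOn u (Ici 0) := hreg.continuousOn
  let ue : ℝ → ℝ := fun x => u (max x 0)
  have huec : Continuous ue :=
    hucont.comp_continuous (by fun_prop) (fun x => le_max_right x 0)
  have hue : ∀ x ≥ (0:ℝ), ue x = u x := fun x hx => by simp [ue, max_eq_left hx]
  let v : ℝ → ℝ := fun y => 1 - ∫ z in (0:ℝ)..y, ue z
  have hvd : ∀ y, HasDerivAt v (-ue y) y := by
    intro y
    exact (intervalIntegral.integral_hasDerivAt_right (huec.intervalIntegrable _ _)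
      (huec.stronglyMeasurableAtFilter _ _) huec.continuousAt).const_sub 1
  have hvc : Continuous v := continuous_iff_continuousAt.2 fun y => (hvd y).continuousAt
  have hv0 : v 0 = 1 := by simp [v]
  have hintI : IntegrableOn u (Ioi 0) := hint.mono_set Ioi_subset_Ici_self
  have hmassI : ∫ x in Ioi (0:ℝ), u x = 1 := by rw [← integral_Ici_eq_integral_Ioi]; exact hmass
  have hvu : ∀ y ≥ (0:ℝ), v y = 1 - ∫ z in (0:ℝ)..y, u z := by
    intro y hy
    have : ∫ z in (0:ℝ)..y, ue z = ∫ z in (0:ℝ)..y, u z := by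
      apply intervalIntegral.integral_congr
      intro z hz
      rw [uIcc_of_le hy] at hz
      exact hue z hz.1
    simp only [v, this]
  have hvI : ∀ y ≥ (0:ℝ), ∫ z in Ici y, u z = v y := by
    intro y hy
    rw [hvu y hy, integral_Ici_eq_integral_Ioi]
    have := intervalIntegral.integral_interval_add_Ioi hintI
      (hintI.mono_set (Ioi_subset_Ioi hy))
    linarith
  have hvnn : ∀ y ≥ (0:ℝ), 0 ≤ v y := by
    intro y hy
    rw [← hvI y hy]
    exact setIntegral_nonneg measurableSet_Ici fun z hz => hpos z (le_trans hy hz)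
  have hv1 : ∀ y ≥ (0:ℝ), v y ≤ 1 := by
    intro y hy
    rw [hvu y hy]
    have := intervalIntegral.integral_nonneg (μ := volume) (f := u) hy (fun z hz => hpos z hz.1)
    linarith
  have hvlim : Tendsto v atTop (nhds 0) := by
    have h := (intervalIntegral_tendsto_integral_Ioi 0 hintI tendsto_id).const_sub 1
    rw [hmassI, sub_self] at h
    refine h.congr' ?_
    filter_upwards [eventually_ge_atTop 0] with y hy
    exact (hvu y hy).symm
  -- derivatives of u
  let du : ℝ → ℝ := derivWithin u (Ici 0)
  have hduC : ContDiffOn ℝ 1 du (Ici 0) :=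
    hreg.derivWithin (uniqueDiffOn_Ici 0) (by norm_num)
  have hud : ∀ x > (0:ℝ), HasDerivAt u (du x) x := fun x hx =>
    ((hreg.differentiableOn (by norm_num)) x hx.le).hasDerivWithinAt.hasDerivAt (Ici_mem_nhds hx)
  have hdud : ∀ x > (0:ℝ), HasDerivAt du (derivWithin du (Ici 0) x) x := fun x hx =>
    ((hduC.differentiableOn (by norm_num)) x hx.le).hasDerivWithinAt.hasDerivAt (Ici_mem_nhds hx)
  have hvd' : ∀ x > (0:ℝ), HasDerivAt v (-u x) x := fun x hx => by
    rw [← hue x hx.le]; exact hvd x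
  -- first integration
  have hF : ∀ x ≥ (0:ℝ), a * du x - (b * ((m + 2 : ℕ) : ℝ) * v x ^ (m + 1) - c) * u x = 0 := by
    intro x hx
    have hcont : ContinuousOn
        (fun x => a * du x - (b * ((m + 2 : ℕ) : ℝ) * v x ^ (m + 1) - c) * u x) (Ici 0) := by
      have h1 := hduC.continuousOn
      have h2 := hvc.continuousOn (s := Ici 0)
      fun_prop
    have := const_of_deriv_zero_aux _ hcont (by
      intro y hy
      have hdv := hvd' y hy
      have hprod : DifferentiableAt ℝ
          (fun y => (b * ((m + 2 : ℕ) : ℝ) * v y ^ (m + 1) - c) * u y) y := by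
        have h1 := hdv.differentiableAt
        have h2 := (hud y hy).differentiableAt
        fun_prop
      have he : derivWithin (fun y =>
          (b * ((m + 2 : ℕ) : ℝ) * (∫ z in Ici y, u z) ^ (m + 1) - c) * u y) (Ici (0:ℝ)) y
          = deriv (fun y => (b * ((m + 2 : ℕ) : ℝ) * v y ^ (m + 1) - c) * u y) y := by
        rw [← hprod.derivWithin (uniqueDiffOn_Ici (0:ℝ) y hy.le)]
        apply derivWithin_congr
        · intro z hz
          simp only [hvI z hz]
        · simp only [hvI y hy.le]
      have ho := hode y hy
      rw [he] at ho
      refine (((hdud y hy).const_mul a).sub hprod.hasDerivAt).congr_deriv ?_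
      linarith) x hx
    rw [this, hv0]
    simp only [one_pow, mul_one]
    have : du 0 = derivWithin u (Ici 0) 0 := rfl
    rw [this]
    linarith
  -- second integration
  obtain ⟨K, hK⟩ : ∃ K, ∀ x ≥ (0:ℝ), a * u x + b * v x ^ (m + 2) - c * v x = K := by
    refine ⟨a * u 0 + b * v 0 ^ (m + 2) - c * v 0, ?_⟩
    apply const_of_deriv_zero_aux (fun x => a * u x + b * v x ^ (m + 2) - c * v x)
    · have h2 := hvc.continuousOn (s := Ici 0)
      fun_prop
    · intro y hy
      have hdv := hvd' y hy
      refine ((((hud y hy).const_mul a).add ((hdv.pow (m + 2)).const_mul b)).sub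
        (hdv.const_mul c)).congr_deriv ?_
      have := hF y hy.le
      have e : m + 2 - 1 = m + 1 := by omega
      rw [e]
      linarith
  have hulim : Tendsto u atTop (nhds (K / a)) := by
    have h : Tendsto (fun x => (K - b * v x ^ (m + 2) + c * v x) / a) atTop
        (nhds ((K - b * 0 ^ (m + 2) + c * 0) / a)) :=
      (((hvlim.pow (m + 2)).const_mul b).const_sub K |>.add (hvlim.const_mul c)).div_const a
    have e : (K - b * 0 ^ (m + 2) + c * 0) / a = K / a := by simp
    rw [e] at h
    refine h.congr' ?_
    filter_upwards [eventually_ge_atTop 0] with y hy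
    rw [div_eq_iff ha.ne', ← hK y hy]
    ring
  have hK0 : K = 0 := by
    have h : K / a = 0 := by
      refine IntegrableAtFilter.eq_zero_of_tendsto (μ := volume)
        ⟨Ici 0, Ici_mem_atTop 0, hint⟩ ?_ hulim
      intro s hs
      rcases mem_atTop_sets.1 hs with ⟨t, ht⟩
      rw [← top_le_iff, ← Real.volume_Ici (a := t)]
      exact measure_mono ht
    rcases div_eq_zero_iff.1 h with h | h
    · exact h
    · exact absurd h ha.ne'
  subst hK0
  have hu : ∀ x ≥ (0:ℝ), u x = (c * v x - b * v x ^ (m + 2)) / a := by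
    intro x hx
    rw [eq_div_iff ha.ne']
    linarith [hK x hx]
  -- third integration
  set α := alphaStat lam b ρ with hα
  have hαc : b = α * c := by
    rw [hα]; unfold alphaStat; rw [← hcdef]; field_simp
  have hα0 : 0 < α := by rw [hα]; unfold alphaStat; rw [← hcdef]; positivity
  have hα1 : α < 1 := by
    rw [hα]; unfold alphaStat; rw [← hcdef, div_lt_one hc1]; exact hbc'
  let E : ℝ → ℝ := fun x => Real.exp (c / a * (((m + 2 : ℕ) : ℝ) - 1) * x)
  let w : ℝ → ℝ := fun x => (1 - α) * E x + α
  have hw : ∀ x, wStat (m + 2) lam a b ρ x = w x := fun x => rfl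
  have hwpos : ∀ x, 0 < w x := fun x => by
    have := Real.exp_pos (c / a * (((m + 2 : ℕ) : ℝ) - 1) * x)
    have := mul_pos (sub_pos.2 hα1) this
    exact add_pos this hα0
  have hEd : ∀ x, HasDerivAt E (E x * (c / a * (((m + 2 : ℕ) : ℝ) - 1) * 1)) x := fun x =>
    ((hasDerivAt_id x).const_mul _).exp
  have hwd : ∀ x, HasDerivAt w ((1 - α) * (E x * (c / a * (((m + 2 : ℕ) : ℝ) - 1) * 1))) x :=
    fun x => ((hEd x).const_mul _).add_const α
  have hp : ∀ x ≥ (0:ℝ), v x ^ (m + 1) * w x - 1 = 0 := by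
    apply linear_zero_aux (fun x => v x ^ (m + 1) * w x - 1)
      (fun x => c / a * ((m:ℝ) + 1) * α * v x ^ (m + 1)) (c / a * ((m:ℝ) + 1) * α)
    · have : Continuous w := continuous_iff_continuousAt.2 fun y => (hwd y).continuousAt
      fun_prop
    · intro y hy
      refine ((((hvd' y hy).pow (m + 1)).mul (hwd y)).sub_const 1).congr_deriv ?_
      rw [hu y hy.le, hαc]
      simp only [w, Nat.add_sub_cancel, Pi.pow_apply]
      push_cast
      field_simp
      ring
    · intro y hy
      have h1 : v y ^ (m + 1) ≤ 1 := pow_le_one₀ (hvnn y hy.le) (hv1 y hy.le)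
      exact mul_le_of_le_one_right (by positivity) h1
    · simp [hv0, w, E]
  intro x hx
  have hpx := hp x hx
  have hwx := hwpos x
  have hvpow : v x ^ (m + 1) = (w x)⁻¹ := by
    exact eq_inv_of_mul_eq_one_left (by linarith)
  have hvx : v x = w x ^ (-(1:ℝ) / ((m:ℝ) + 1)) := by
    have hm : ((m + 1 : ℕ) : ℝ) = (m:ℝ) + 1 := by push_cast; ring
    rw [← Real.pow_rpow_inv_natCast (hvnn x hx) (Nat.succ_ne_zero m), Nat.succ_eq_add_one,
      hvpow, ← Real.rpow_neg_one, ← Real.rpow_mul hwx.le, hm]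
    congr 1
  have hexp : w x ^ (-((m + 2 : ℕ):ℝ) / (((m + 2 : ℕ) : ℝ) - 1)) = v x * (w x)⁻¹ := by
    rw [hvx, ← Real.rpow_neg_one (w x), ← Real.rpow_add hwx]
    congr 1
    push_cast
    have : (m:ℝ) + 1 ≠ 0 := by positivity
    have h' : (m:ℝ) + 2 - 1 = m + 1 := by ring
    rw [h']
    field_simp
    ring
  unfold uStat
  rw [hw, hexp, hu x hx, ← hcdef, ← hα]
  have hE : Real.exp (c / a * (((m + 2 : ℕ) : ℝ) - 1) * x) = E x := rfl
  rw [hE]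
  have hEw : (1 - α) * E x = w x - α := by simp [w]
  have e2 : v x ^ (m + 2) = v x * (w x)⁻¹ := by rw [← hvpow]; ring
  rw [e2, mul_assoc (c / a), hEw]
  rw [hαc]
  field_simp
end

section
/- Let a > 0 and let f : ℝ → ℝ be continuously differentiable with f(0) = 0. Let v ∈ C²([0,∞)) satisfy (f∘v)'(x) + a v''(x) = 0 for all x > 0 and lim_{x→∞} v(x) = 0. Then f(v(x)) + a v'(x) = 0 for all x ≥ 0; in particular v solves the first-order equation v' = −a^{−1} f(v) on [0,∞). -/
open Set Filter

/-- Integration of the stationary equation: if `v ∈ C²([0,∞))` satisfies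
`(f∘v)' + a v'' = 0` on `(0,∞)` and `v(x) → 0` as `x → ∞`, where `f` is `C¹` with
`f(0) = 0` and `a > 0`, then `f(v(x)) + a v'(x) = 0` for all `x ≥ 0`. -/
theorem stationary_equation_first_integral
    (a : ℝ) (ha : 0 < a) (f : ℝ → ℝ) (hf : ContDiff ℝ 1 f) (hf0 : f 0 = 0)
    (v : ℝ → ℝ) (hv : ContDiffOn ℝ 2 v (Ici (0:ℝ)))
    (hode : ∀ x > (0:ℝ),
      derivWithin (f ∘ v) (Ici (0:ℝ)) x
        + a * derivWithin (derivWithin v (Ici (0:ℝ))) (Ici (0:ℝ)) x = 0)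
    (hlim : Tendsto v atTop (nhds 0)) :
    ∀ x ≥ (0:ℝ), f (v x) + a * derivWithin v (Ici (0:ℝ)) x = 0 := by
  set w := derivWithin v (Ici (0:ℝ)) with hw
  have hu : UniqueDiffOn ℝ (Ici (0:ℝ)) := uniqueDiffOn_Ici 0
  have hw1 : ContDiffOn ℝ 1 w (Ici (0:ℝ)) := hv.derivWithin hu (by norm_num)
  have hfv : ContDiffOn ℝ 1 (f ∘ v) (Ici (0:ℝ)) :=
    hf.comp_contDiffOn (hv.of_le (by norm_num))
  have key : ∀ (h : ℝ → ℝ), DifferentiableOn ℝ h (Ici (0:ℝ)) → ∀ x > (0:ℝ),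
      HasDerivAt h (derivWithin h (Ici (0:ℝ)) x) x := fun h hh x hx =>
    ((hh x (le_of_lt hx)).hasDerivWithinAt).hasDerivAt (Ici_mem_nhds hx)
  have hwd := hw1.differentiableOn (by norm_num)
  have hfd := hfv.differentiableOn (by norm_num)
  have hvd := hv.differentiableOn (by norm_num)
  let g : ℝ → ℝ := fun x => (f ∘ v) x + a * w x
  have hgc : ContinuousOn g (Ici (0:ℝ)) :=
    hfd.continuousOn.add (continuousOn_const.mul hwd.continuousOn)
  have hg' : ∀ x > (0:ℝ), HasDerivAt g 0 x := by
    intro x hx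
    have h := (key _ hfd x hx).add ((key _ hwd x hx).const_mul a)
    rw [hode x hx] at h
    exact h
  have hconst : ∀ x ≥ (0:ℝ), ∀ y > x, g y = g x := by
    intro x hx y hy
    obtain ⟨c, hc, h⟩ := exists_hasDerivAt_eq_slope g (fun _ => 0) hy
      (hgc.mono fun z hz => le_trans hx hz.1)
      (fun z hz => hg' z (lt_of_le_of_lt hx hz.1))
    have hne : y - x ≠ 0 := (sub_pos.2 hy).ne'
    rw [eq_div_iff hne] at h
    linarith
  have hmv : ∀ x : ℝ, ∃ c, 0 ≤ x → x < c ∧ w c = v (x + 1) - v x := by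
    intro x
    by_cases hx : 0 ≤ x
    · obtain ⟨c, hc, h⟩ := exists_hasDerivAt_eq_slope v w (lt_add_one x)
        (hvd.continuousOn.mono fun z hz => le_trans hx hz.1)
        (fun z hz => key v hvd z (lt_of_le_of_lt hx hz.1))
      refine ⟨c, fun _ => ⟨hc.1, ?_⟩⟩
      rw [h]; simp
    · exact ⟨0, fun h => absurd h hx⟩
  choose c hc using hmv
  have hct : Tendsto c atTop atTop := by
    refine tendsto_atTop_mono' _ ?_ tendsto_id
    filter_upwards [eventually_ge_atTop 0] with x hx using (hc x hx).1.le
  have hwc : Tendsto (fun x => w (c x)) atTop (nhds 0) := by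
    have h1 := (hlim.comp (tendsto_atTop_add_const_right atTop (1:ℝ) tendsto_id)).sub hlim
    rw [sub_zero] at h1
    refine h1.congr' ?_
    filter_upwards [eventually_ge_atTop 0] with x hx using (hc x hx).2.symm
  have hfc : Tendsto (fun x => f (v (c x))) atTop (nhds 0) := by
    have h1 := (hf.continuous.tendsto 0).comp (hlim.comp hct)
    rw [hf0] at h1
    exact h1
  have hgt : Tendsto (fun x => g (c x)) atTop (nhds 0) := by
    have h1 := hfc.add (hwc.const_mul a)
    simpa [g] using h1
  intro x hx
  have hgx : Tendsto (fun y => g (c y)) atTop (nhds (g x)) := by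
    refine tendsto_const_nhds.congr' ?_
    filter_upwards [hct.eventually_gt_atTop x] with y hy using (hconst x hx _ hy).symm
  exact tendsto_nhds_unique hgx hgt
end

section
/- As b → 0+, the probability measures μ_b(dx) = u_b(x)dx on [0,∞) converge weakly to the exponential distribution with density (λ|ρ|/a)e^{−(λ|ρ|/a)x}dx. -/
open MeasureTheory Set Filter

/-- As `b → 0⁺`, the probability measures `u_b(x)dx` on `[0,∞)` converge weakly to the
exponential distribution with density `(λ|ρ|/a) e^{−(λ|ρ|/a)x}`: for every bounded
continuous test function `g`, the integrals converge. -/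
theorem uStat_weak_convergence_to_exponential_as_b_to_zero
    (ℓ : ℕ) (hℓ : 2 ≤ ℓ) (lam a ρ : ℝ)
    (hlam : 0 < lam) (ha : 0 < a) (hρ : ρ < 0) :
    ∀ g : ℝ → ℝ, Continuous g → (∃ C : ℝ, ∀ x, |g x| ≤ C) →
      Tendsto (fun b => ∫ x in Ici (0:ℝ), g x * uStat ℓ lam a b ρ x)
        (nhdsWithin 0 (Ioi 0))
        (nhds (∫ x in Ici (0:ℝ),
          g x * (lam * |ρ| / a * Real.exp (-(lam * |ρ| / a) * x)))) := by
  intro g hg ⟨C, hC⟩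
  have hk : 0 < -lam * ρ := by nlinarith
  have habs : lam * |ρ| = -lam * ρ := by rw [abs_of_neg hρ]; ring
  rw [habs]
  obtain ⟨k, hkdef⟩ : ∃ k, k = -lam * ρ := ⟨_, rfl⟩
  rw [← hkdef] at hk ⊢
  have hL : (0:ℝ) < (ℓ:ℝ) - 1 := by
    have : (2:ℝ) ≤ ℓ := by exact_mod_cast hℓ
    linarith
  have hC0 : 0 ≤ C := (abs_nonneg _).trans (hC 0)
  have key : ∀ c x : ℝ, Real.exp (c / a * ((ℓ:ℝ) - 1) * x) ^ (-(ℓ:ℝ) / ((ℓ:ℝ) - 1))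
      = Real.exp (-(c / a * ℓ * x)) := by
    intro c x
    rw [← Real.exp_mul]
    congr 1
    field_simp
  apply tendsto_integral_filter_of_dominated_convergence
    (fun x => C * (2 * k / a * (1 / 2 : ℝ) ^ (-(ℓ:ℝ) / ((ℓ:ℝ) - 1)) * Real.exp (-(k / a) * x)))
  · refine Eventually.of_forall fun b => Measurable.aestronglyMeasurable ?_
    unfold uStat wStat
    have := hg.measurable
    fun_prop
  · have hev : ∀ᶠ b in nhdsWithin (0:ℝ) (Ioi 0), b ∈ Ioo 0 k := Ioo_mem_nhdsGT hk
    filter_upwards [hev] with b hb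
    filter_upwards [ae_restrict_mem measurableSet_Ici] with x hx
    have hx0 : 0 ≤ x := hx
    obtain ⟨hb0, hbk⟩ := hb
    unfold uStat wStat alphaStat cOne
    rw [← hkdef]
    have hc : 0 < k + b := by linarith
    have h1 : b / (k + b) ≤ 1 / 2 := by rw [div_le_div_iff₀ hc (by norm_num)]; linarith
    have h0 : 0 < b / (k + b) := by positivity
    set α := b / (k + b)
    set E := Real.exp ((k + b) / a * ((ℓ:ℝ) - 1) * x) with hE
    have hEpos : 0 < E := Real.exp_pos _
    have hw : (1 / 2) * E ≤ (1 - α) * E + α := by nlinarith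
    have hp : -(ℓ:ℝ) / ((ℓ:ℝ) - 1) ≤ 0 :=
      div_nonpos_of_nonpos_of_nonneg (by linarith) hL.le
    have hw2 := Real.rpow_le_rpow_of_nonpos (by positivity) hw hp
    rw [Real.mul_rpow (by norm_num) hEpos.le, hE, key, ← hE] at hw2
    have hwpos : 0 < (1 - α) * E + α := by nlinarith
    have h1α : 0 ≤ 1 - α := by linarith
    rw [Real.norm_eq_abs, abs_mul]
    refine mul_le_mul (hC x) ?_ (abs_nonneg _) hC0
    rw [abs_of_nonneg (by positivity)]
    calc (k + b) / a * (1 - α) * E * ((1 - α) * E + α) ^ (-(ℓ:ℝ) / ((ℓ:ℝ) - 1))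
        ≤ (2 * k / a) * 1 * E * ((1 / 2 : ℝ) ^ (-(ℓ:ℝ) / ((ℓ:ℝ) - 1))
            * Real.exp (-((k + b) / a * ℓ * x))) := by
          gcongr <;> linarith
      _ = 2 * k / a * (1 / 2 : ℝ) ^ (-(ℓ:ℝ) / ((ℓ:ℝ) - 1))
            * Real.exp (-((k + b) / a) * x) := by
          have : Real.exp (-((k + b) / a) * x) = E * Real.exp (-((k + b) / a * ℓ * x)) := by
            rw [hE, ← Real.exp_add]; congr 1; ring
          rw [this]; ring
      _ ≤ _ := by
          gcongr
          linarith
  · have h := integrableOn_exp_mul_Ioi (a := -(k / a)) (by simp; positivity) 0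
    rw [← integrableOn_Ici_iff_integrableOn_Ioi] at h
    exact (Integrable.const_mul (Integrable.const_mul h _) _)
  · refine Eventually.of_forall fun x => ?_
    refine Tendsto.const_mul _ ?_
    have hval : k / a * Real.exp (-(k / a) * x) = uStat ℓ lam a 0 ρ x := by
      unfold uStat wStat alphaStat cOne
      rw [← hkdef]
      simp only [add_zero, zero_div, sub_zero, one_mul, mul_one]
      rw [key, mul_assoc, ← Real.exp_add]
      congr 2
      ring
    rw [hval]
    have hcont : ContinuousAt (fun b => uStat ℓ lam a b ρ x) 0 := by
      unfold uStat wStat alphaStat cOne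
      rw [← hkdef]
      have hα : ContinuousAt (fun b : ℝ => b / (k + b)) 0 :=
        ContinuousAt.div (by fun_prop) (by fun_prop) (by simpa using hk.ne')
      have hEc : ContinuousAt (fun b : ℝ => Real.exp ((k + b) / a * ((ℓ:ℝ) - 1) * x)) 0 := by
        fun_prop
      have hc : ContinuousAt (fun b : ℝ => (k + b) / a) 0 := by fun_prop
      have h1 : ContinuousAt (fun b : ℝ => 1 - b / (k + b)) 0 := continuousAt_const.sub hα
      refine ((hc.mul h1).mul hEc).mul (((h1.mul hEc).add hα).rpow_const (Or.inl ?_))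
      simp
    exact hcont.tendsto.mono_left nhdsWithin_le_nhds
end

section
/- Fix an integer ℓ ≥ 2 and for n ≥ ℓ and r ∈ {1,…,n} let p_{n,r} = C(n−r, ℓ−1)/C(n, ℓ). Then lim_{n→∞} max_{1 ≤ r ≤ n} | (n/ℓ)·p_{n,r} − (1 − r/n)^{ℓ−1} | = 0; equivalently, writing p_{n,r} = (ℓ/n)[(1 − r/n)^{ℓ−1} + α_{n,r}], one has max_{r ∈ {1,…,n}} |α_{n,r}| → 0 as n → ∞. -/
/-- The routing probability of the power-of-`ℓ`-choices algorithm (sampling without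
replacement): `p_{n,r} = C(n−r, ℓ−1) / C(n, ℓ)`. -/
noncomputable def pnr (n ℓ r : ℕ) : ℝ :=
  (Nat.choose (n - r) (ℓ - 1) : ℝ) / (Nat.choose n ℓ : ℝ)

lemma factor_bound (n m j k : ℕ) (hm : m + 1 ≤ n) (hj : j < k) (hk : k < n) :
    |((m - j : ℕ) : ℝ) / ((n - 1 - j : ℕ) : ℝ) - (m : ℝ) / n| ≤ (k : ℝ) / ((n : ℝ) - k) := by
  have hn : (0:ℝ) < n := by exact_mod_cast (by omega : 0 < n)
  have hnk : (0:ℝ) < (n:ℝ) - k := by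
    have : (k:ℝ) < n := by exact_mod_cast hk
    linarith
  have hjk : (j:ℝ) + 1 ≤ k := by exact_mod_cast hj
  have hmn : (m:ℝ) + 1 ≤ n := by exact_mod_cast hm
  have hm0 : (0:ℝ) ≤ m := Nat.cast_nonneg m
  have hj0 : (0:ℝ) ≤ j := Nat.cast_nonneg j
  rcases le_or_gt j m with h | h
  · have e1 : ((m - j : ℕ) : ℝ) = m - j := by push_cast [h]; ring
    have e2 : ((n - 1 - j : ℕ) : ℝ) = n - 1 - j := by
      rw [Nat.cast_sub (by omega), Nat.cast_sub (by omega)]; simp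
    have hd : (0:ℝ) < (n:ℝ) - 1 - j := by linarith
    rw [e1, e2]
    have e3 : ((m:ℝ) - j) / (n - 1 - j) - m / n = ((m * (1 + j) - n * j) / n) / (n - 1 - j) := by
      field_simp
      ring
    rw [e3, abs_div, abs_of_pos hd]
    apply div_le_div₀ (by linarith) _ hnk (by linarith)
    rw [abs_div, abs_of_pos hn, div_le_iff₀ hn, abs_le]
    constructor <;> nlinarith
  · have e1 : m - j = 0 := by omega
    have : (m:ℝ) < j := by exact_mod_cast h
    rw [e1, Nat.cast_zero, zero_div, zero_sub, abs_neg, abs_of_nonneg (by positivity)]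
    apply div_le_div₀ <;> linarith

lemma prod_bound (n m k : ℕ) (hm : m + 1 ≤ n) (hk : k < n) (j : ℕ) (hj : j ≤ k) :
    |(m.descFactorial j : ℝ) / ((n - 1).descFactorial j : ℝ) - ((m : ℝ) / n) ^ j|
      ≤ j * ((k : ℝ) / ((n : ℝ) - k)) := by
  induction j with
  | zero => simp
  | succ j ih =>
    have ih := ih (by omega)
    have hf := factor_bound n m j k hm (by omega) hk
    rw [Nat.descFactorial_succ, Nat.descFactorial_succ, pow_succ']
    push_cast [-Nat.cast_sub]
    rw [mul_div_mul_comm]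
    set a := ((m - j : ℕ) : ℝ) / ((n - 1 - j : ℕ) : ℝ)
    set b := (m.descFactorial j : ℝ) / ((n - 1).descFactorial j : ℝ) with hb
    set c := (m : ℝ) / n with hc
    have hb0 : 0 ≤ b := by positivity
    have hb1 : b ≤ 1 := by
      apply div_le_one_of_le₀ _ (by positivity)
      exact_mod_cast Nat.descFactorial_le j (by omega)
    have hc0 : 0 ≤ c := by positivity
    have hc1 : c ≤ 1 := by
      apply div_le_one_of_le₀ _ (by positivity)
      exact_mod_cast (by omega)
    have e : a * b - c * c ^ j = (a - c) * b + c * (b - c ^ j) := by ring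
    rw [e]
    refine (abs_add_le _ _).trans ?_
    rw [abs_mul, abs_mul, abs_of_nonneg hb0, abs_of_nonneg hc0]
    have h1 := mul_le_of_le_one_right (abs_nonneg (a - c)) hb1
    have h2 := mul_le_of_le_one_left (abs_nonneg (b - c ^ j)) hc1
    linarith

/-- Uniform asymptotics of `p_{n,r}`:
`max_{1 ≤ r ≤ n} |(n/ℓ) p_{n,r} − (1 − r/n)^{ℓ−1}| → 0` as `n → ∞`. -/
theorem pnr_uniform_asymptotics (ℓ : ℕ) (hℓ : 2 ≤ ℓ) :
    ∀ ε > (0:ℝ), ∃ N : ℕ, ∀ n : ℕ, N ≤ n → ℓ ≤ n →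
      ∀ r : ℕ, 1 ≤ r → r ≤ n →
        |((n : ℝ) / (ℓ : ℝ)) * pnr n ℓ r - (1 - (r : ℝ) / (n : ℝ)) ^ (ℓ - 1)| < ε := by
  intro ε hε
  obtain ⟨k, rfl⟩ : ∃ k, ℓ = k + 1 := ⟨ℓ - 1, by omega⟩
  obtain ⟨N, hN⟩ := exists_nat_gt ((k:ℝ) + k * k / ε)
  refine ⟨N, fun n hNn hkn r hr hrn => ?_⟩
  have hn : (0:ℝ) < n := by exact_mod_cast (by omega : 0 < n)
  have hNn' : (N:ℝ) ≤ n := by exact_mod_cast hNn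
  have hnk : (0:ℝ) < (n:ℝ) - k := by
    have : (k:ℝ) + 1 ≤ n := by exact_mod_cast hkn
    linarith
  have key := prod_bound n (n - r) k (by omega) (by omega) k le_rfl
  have e1 : 1 - (r:ℝ) / n = ((n - r : ℕ) : ℝ) / n := by
    rw [Nat.cast_sub hrn]; field_simp
  have e2 : ((n : ℝ) / ((k + 1 : ℕ) : ℝ)) * pnr n (k + 1) r
      = ((n - r).descFactorial k : ℝ) / ((n - 1).descFactorial k : ℝ) := by
    have h := Nat.add_one_mul_choose_eq (n - 1) k
    rw [Nat.sub_add_cancel (by omega)] at h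
    have h' : (n:ℝ) * ((n - 1).choose k : ℝ) = (n.choose (k + 1) : ℝ) * ((k + 1 : ℕ) : ℝ) := by
      exact_mod_cast h
    have hc : (0:ℝ) < ((n - 1).choose k : ℝ) := by
      exact_mod_cast Nat.choose_pos (by omega)
    have hc2 : (0:ℝ) < (n.choose (k + 1) : ℝ) := by
      exact_mod_cast Nat.choose_pos (by omega)
    have hk1 : (0:ℝ) < ((k + 1 : ℕ) : ℝ) := by positivity
    have hfac : ((Nat.factorial k : ℕ) : ℝ) ≠ 0 := by positivity
    rw [Nat.descFactorial_eq_factorial_mul_choose, Nat.descFactorial_eq_factorial_mul_choose,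
      Nat.cast_mul, Nat.cast_mul, mul_div_mul_left _ _ hfac]
    unfold pnr
    rw [Nat.add_sub_cancel, div_mul_div_comm, div_eq_div_iff (by positivity) hc.ne']
    linear_combination ((n - r).choose k : ℝ) * h'
  rw [e2, e1, Nat.add_sub_cancel]
  refine key.trans_lt ?_
  rw [← mul_div_assoc, div_lt_iff₀ hnk]
  have : (k:ℝ) * k / ε < n - k := by linarith
  rw [div_lt_iff₀ hε] at this
  linarith
end

section
/- Let n ≥ 1 be an integer, ε > 0, and let x, y ∈ ℝ^n. Let μ_x = n^{−1} Σ_{i=1}^n δ_{x_i} and μ_y = n^{−1} Σ_{i=1}^n δ_{y_i} be the corresponding empirical probability measures on ℝ. If the Lévy–Prokhorov distance between μ_x and μ_y is greater than ε, then #{i ∈ {1,…,n} : |x_i − y_i| ≥ ε} > nε. -/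
open MeasureTheory

lemma emp_aux (n : ℕ) (hn : 1 ≤ n) (ε : ℝ) (hε : 0 < ε) (x y : Fin n → ℝ)
    (hc : ((Finset.univ.filter fun i : Fin n => ε ≤ |x i - y i|).card : ℝ) ≤ (n : ℝ) * ε)
    (B : Set ℝ) (hB : MeasurableSet B) :
    ((n : ENNReal)⁻¹ • ∑ i : Fin n, Measure.dirac (x i)) B ≤
      ((n : ENNReal)⁻¹ • ∑ i : Fin n, Measure.dirac (y i)) (Metric.thickening ε B)
        + ENNReal.ofReal ε := by
  classical
  have hn0 : (n : ENNReal) ≠ 0 := by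
    have : n ≠ 0 := by omega
    exact_mod_cast this
  have hc' : ((Finset.univ.filter fun i : Fin n => ε ≤ |x i - y i|).card : ENNReal)
      ≤ n * ENNReal.ofReal ε := by
    have := ENNReal.ofReal_le_ofReal hc
    rwa [ENNReal.ofReal_mul (by positivity), ENNReal.ofReal_natCast, ENNReal.ofReal_natCast]
      at this
  have hT : MeasurableSet (Metric.thickening ε B) := Metric.isOpen_thickening.measurableSet
  simp only [Measure.smul_apply, Measure.finsetSum_apply, smul_eq_mul,
    Measure.dirac_apply' _ hB, Measure.dirac_apply' _ hT]
  have key : ∑ i : Fin n, B.indicator (1 : ℝ → ENNReal) (x i) ≤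
      ∑ i : Fin n, (Metric.thickening ε B).indicator (1 : ℝ → ENNReal) (y i)
        + n * ENNReal.ofReal ε := by
    refine le_trans ?_ (add_le_add_right hc' _)
    rw [Finset.card_filter, Nat.cast_sum, ← Finset.sum_add_distrib]
    refine Finset.sum_le_sum fun i _ => ?_
    by_cases hx : x i ∈ B
    · by_cases hd : ε ≤ |x i - y i|
      · simp [hx, hd]
      · have : y i ∈ Metric.thickening ε B := by
          rw [Metric.mem_thickening_iff]
          refine ⟨x i, hx, ?_⟩
          rw [dist_comm, Real.dist_eq]
          exact not_le.mp hd
        simp [hx, this]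
    · simp [hx]
  calc _ ≤ (n : ENNReal)⁻¹ * (∑ i : Fin n, (Metric.thickening ε B).indicator (1 : ℝ → ENNReal) (y i)
        + n * ENNReal.ofReal ε) := by gcongr
    _ = _ := by
      rw [mul_add, ← mul_assoc, ENNReal.inv_mul_cancel hn0 (ENNReal.natCast_ne_top n), one_mul]

/-- If the Lévy–Prokhorov distance between the empirical measures of `x, y ∈ ℝ^n`
exceeds `ε`, then more than `nε` of the coordinates satisfy `|x_i − y_i| ≥ ε`. -/
theorem levyProkhorov_empirical_displacement
    (n : ℕ) (hn : 1 ≤ n) (ε : ℝ) (hε : 0 < ε) (x y : Fin n → ℝ)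
    (h : ε < levyProkhorovDist
      ((n : ENNReal)⁻¹ • ∑ i : Fin n, Measure.dirac (x i))
      ((n : ENNReal)⁻¹ • ∑ i : Fin n, Measure.dirac (y i))) :
    (n : ℝ) * ε < ((Finset.univ.filter fun i : Fin n => ε ≤ |x i - y i|).card : ℝ) := by
  by_contra hc
  rw [not_lt] at hc
  refine absurd h (not_lt.mpr ?_)
  refine ENNReal.toReal_le_of_le_ofReal hε.le ?_
  refine sInf_le ?_
  intro B hB
  rw [ENNReal.toReal_ofReal hε.le]
  refine ⟨emp_aux n hn ε hε x y hc B hB, emp_aux n hn ε hε y x ?_ B hB⟩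
  simpa only [abs_sub_comm] using hc
end
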